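/- arXiv:1911.10889 — 2 statements merged into one kernel-verified Lean document; each statement's English description precedes it below -/
import Mathlib

section
/- Let X be a nonnegative, arithmetic random variable supported on the nonnegative integers with span 1 and E[X] = ∞, whose truncated mean ℓ(x) = ∫₀ˣ P[X > t] dt is slowly varying at infinity. Then the renewal mass function satisfies lim_{n→∞} ℓ(n) Σ_{k≥0} P[S_k = n] = 1. -/
/-! Write `X` for a variable with law `μ`, `f` for its characteristic function,
`u(n) = Σ_k P[S_k = n]` for the renewal masses and `φ(θ) = θ ℓ(1/θ) = E[min(θX, 1)]`. The theorem
follows from the renewal equation `Σ_{k ≤ n} u(n - k) P[X > k] = 1`: since `x P[X > x] = o(ℓ(x))`,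
and since summing the equation gives `Σ_{k < N} u(k) ≤ 2N / ℓ(N)`, the terms with `k ≥ n / D` are
negligible for every fixed `D`. So `u(n) ℓ(n) → 1` as soon as `u` is locally regular, in the sense
that `|u(n) - u(n - m)| ≤ η / ℓ(n)` for all `m ≤ n / D`, with `D` depending on `η` only.

Local regularity is obtained by Fourier inversion. The masses discounted by `r < 1` per step are
`u_r(n) = (2 / π) ∫_0^π Re (1 / (1 - r f(θ))) cos(nθ) dθ` for `n ≥ 1`, with a nonnegative integrand
factor; all estimates are uniform in `r` and `r ↑ 1` at the end. The integral is cut at `A / n`.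

* Low frequencies: comparison with the Fejér kernel bounds `∫_0^{1/N} Re (1 / (1 - r f))` by a
  constant times `N⁻¹ Σ_{k < N} u(k)`, hence by `C / ℓ(N)`; moreover
  `cos(nθ) - cos((n - m)θ) = O(A / D)` for `θ ≤ A / n`.
* High frequencies: shifting `θ` by `π / n` changes the sign of `cos(nθ)`, so that the integral is
  governed by the increments of `1 / (1 - r f)`. These are controlled by
  `|f(θ + h) - f(θ)| ≤ 2 φ(h)` and `|1 - f(θ)| ≥ c φ(θ)`: near `0` the latter holds because
  `Im f(θ)` is of the order of `φ(θ)`, as `ℓ` is slowly varying, and away from `0` because of span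
  one and compactness. Since also `∫_a^π φ^{-2} ≤ C a / φ(a)^2`, again by slow variation, the
  contribution is `O(1 / (A ℓ(n)))`.

Choosing first `A` and then `D` large gives the claim.
-/

open MeasureTheory Filter Set Asymptotics Topology

/-- Tail of a distribution: `P[X > x]`. -/
noncomputable def tailF (μ : Measure ℝ) (x : ℝ) : ℝ := (μ (Set.Ioi x)).toReal

/-- Truncated mean `ℓ(x) = ∫₀ˣ (1 - F(t)) dt`. -/
noncomputable def ell (μ : Measure ℝ) (x : ℝ) : ℝ := ∫ t in (0:ℝ)..x, tailF μ t

/-- A function is slowly varying at infinity. -/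
def SlowlyVarying (f : ℝ → ℝ) : Prop :=
  (∀ᶠ x in atTop, 0 < f x) ∧
    ∀ c : ℝ, 1 < c → Tendsto (fun x => f (c * x) / f x) atTop (𝓝 1)

/-- `n`-fold convolution power of `μ`: the law of `S_n`. -/
noncomputable def convPow (μ : Measure ℝ) : ℕ → Measure ℝ
  | 0 => Measure.dirac 0
  | n + 1 => Measure.map (fun p : ℝ × ℝ => p.1 + p.2) ((convPow μ n).prod μ)

/-- The renewal (Green) measure `U{I} = Σ_{n≥0} P[S_n ∈ I]`. -/
noncomputable def renewal (μ : Measure ℝ) (s : Set ℝ) : ENNReal :=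
  ∑' n : ℕ, convPow μ n s

/-! ### The truncated mean -/

lemma tailF_nonneg (μ : Measure ℝ) (x : ℝ) : 0 ≤ tailF μ x := ENNReal.toReal_nonneg

lemma tailF_antitone (μ : Measure ℝ) [IsProbabilityMeasure μ] : Antitone (tailF μ) := by
  intro x y hxy
  exact measureReal_mono (μ := μ) (Ioi_subset_Ioi hxy)

lemma tailF_le_one (μ : Measure ℝ) [IsProbabilityMeasure μ] (x : ℝ) : tailF μ x ≤ 1 :=
  measureReal_le_one (μ := μ)

lemma tailF_eq_integral (μ : Measure ℝ) [IsProbabilityMeasure μ] (x : ℝ) :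
    tailF μ x = ∫ y, (Ioi x).indicator (fun _ => (1 : ℝ)) y ∂μ := by
  rw [integral_indicator_const _ measurableSet_Ioi]
  simp [tailF, Measure.real]

lemma tailF_intervalIntegrable (μ : Measure ℝ) [IsProbabilityMeasure μ] (a b : ℝ) :
    IntervalIntegrable (tailF μ) volume a b :=
  (tailF_antitone μ).intervalIntegrable

lemma ae_nonneg_of_lattice {μ : Measure ℝ} (hX : ∀ᵐ x : ℝ ∂μ, ∃ n : ℕ, x = n) :
    ∀ᵐ x ∂μ, 0 ≤ x := by
  filter_upwards [hX] with x ⟨n, hn⟩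
  rw [hn]; positivity

lemma integrable_min {μ : Measure ℝ} [IsProbabilityMeasure μ] (hX : ∀ᵐ x : ℝ ∂μ, ∃ n : ℕ, x = n)
    (x : ℝ) : Integrable (fun y => min y x) μ := by
  refine Integrable.of_bound (C := |x|) (by fun_prop) ?_
  filter_upwards [ae_nonneg_of_lattice hX] with y hy
  rw [Real.norm_eq_abs, abs_le]
  exact ⟨le_min (by linarith [abs_nonneg x]) (neg_abs_le x), (min_le_right _ _).trans (le_abs_self x)⟩

/-- `ℓ(x) = E[min(X, x)]`, the form of the truncated mean used in all the estimates on the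
characteristic function. -/
lemma ell_eq_integral_min {μ : Measure ℝ} [IsProbabilityMeasure μ]
    (hX : ∀ᵐ x : ℝ ∂μ, ∃ n : ℕ, x = n) {x : ℝ} (hx : 0 ≤ x) : ell μ x = ∫ y, min y x ∂μ := by
  rw [(integrable_min hX x).integral_eq_integral_meas_lt]
  · have h1 : ∀ t ∈ Ioi (0 : ℝ), μ.real {a | t < min a x} =
        (Ioo 0 x).indicator (tailF μ) t := by
      intro t ht
      by_cases htx : t < x
      · rw [indicator_of_mem (show t ∈ Ioo 0 x from ⟨ht, htx⟩)]
        have : {a : ℝ | t < min a x} = Ioi t := by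
          ext a; simp [htx]
        rw [this]; rfl
      · rw [indicator_of_notMem (by simp [htx])]
        have : {a : ℝ | t < min a x} = ∅ := by
          ext a; simp [htx]
        rw [this]; simp
    rw [setIntegral_congr_fun measurableSet_Ioi h1, setIntegral_indicator measurableSet_Ioo,
      ell, intervalIntegral.integral_of_le hx, integral_Ioc_eq_integral_Ioo]
    congr 2
    ext t; simp
  · filter_upwards [ae_nonneg_of_lattice hX] with y hy
    exact le_min hy hx

lemma ell_sub (μ : Measure ℝ) [IsProbabilityMeasure μ] (x y : ℝ) :
    ell μ y - ell μ x = ∫ t in x..y, tailF μ t := by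
  rw [ell, ell, intervalIntegral.integral_interval_sub_left] <;>
    exact tailF_intervalIntegrable μ _ _

lemma ell_mono (μ : Measure ℝ) [IsProbabilityMeasure μ] : Monotone (ell μ) := by
  intro x y hxy
  have := ell_sub μ x y
  have h2 : 0 ≤ ∫ t in x..y, tailF μ t :=
    intervalIntegral.integral_nonneg hxy (fun t _ => tailF_nonneg μ t)
  linarith

lemma ell_nonneg (μ : Measure ℝ) [IsProbabilityMeasure μ] {x : ℝ} (hx : 0 ≤ x) : 0 ≤ ell μ x :=
  intervalIntegral.integral_nonneg hx (fun t _ => tailF_nonneg μ t)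

lemma sub_mul_tailF_le (μ : Measure ℝ) [IsProbabilityMeasure μ] {x y : ℝ} (hxy : x ≤ y) :
    (y - x) * tailF μ y ≤ ell μ y - ell μ x := by
  rw [ell_sub]
  have : ∫ t in x..y, tailF μ y ≤ ∫ t in x..y, tailF μ t :=
    intervalIntegral.integral_mono_on hxy (by simp) (tailF_intervalIntegrable μ _ _)
      (fun t ht => tailF_antitone μ ht.2)
  simpa using this

/-- On the integers the truncated mean is the partial sum of the tails. -/
lemma ell_nat {μ : Measure ℝ} [IsProbabilityMeasure μ] (hX : ∀ᵐ x : ℝ ∂μ, ∃ n : ℕ, x = n) (N : ℕ) :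
    ell μ N = ∑ k ∈ Finset.range N, tailF μ k := by
  rw [ell_eq_integral_min hX (by positivity)]
  simp_rw [tailF_eq_integral]
  rw [← integral_finsetSum]
  · refine integral_congr_ae ?_
    filter_upwards [hX] with x ⟨n, hn⟩
    subst hn
    simp only [indicator_apply, mem_Ioi, Nat.cast_lt]
    rw [Finset.sum_ite]
    simp only [Finset.sum_const, nsmul_eq_mul, mul_one, mul_zero, add_zero]
    have : (Finset.range N).filter (fun k => k < n) = Finset.range (min n N) := by
      ext k; simp [and_comm]
    rw [this]; simp
  · intro k _
    exact (integrable_const (1 : ℝ)).indicator measurableSet_Ioi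

lemma tailF_zero_pos {μ : Measure ℝ} [IsProbabilityMeasure μ]
    (hX : ∀ᵐ x : ℝ ∂μ, ∃ n : ℕ, x = n)
    (hspan : ¬ ∃ d : ℕ, 2 ≤ d ∧ μ {x : ℝ | ∃ k : ℕ, x = (d * k : ℕ)} = 1) :
    0 < tailF μ 0 := by
  refine lt_of_le_of_ne (tailF_nonneg μ 0) fun h => hspan ⟨2, le_rfl, ?_⟩
  have h0 : μ (Ioi 0) = 0 := by
    rcases (ENNReal.toReal_eq_zero_iff _).1 h.symm with h | h
    · exact h
    · exact absurd h (measure_ne_top _ _)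
  have h1 : ∀ᵐ x ∂μ, x ∉ Ioi (0 : ℝ) := measure_eq_zero_iff_ae_notMem.1 h0
  refine (prob_compl_eq_zero_iff₀ ?_).1 ?_ 
  · refine (Set.Countable.measurableSet ?_).nullMeasurableSet
    refine (countable_range (fun k : ℕ => ((2 * k : ℕ) : ℝ))).mono ?_
    rintro x ⟨k, hk⟩; exact ⟨k, hk.symm⟩
  · refine measure_eq_zero_iff_ae_notMem.2 ?_
    filter_upwards [h1, ae_nonneg_of_lattice hX] with x hx hx0
    simp only [mem_compl_iff, not_not]
    refine ⟨0, ?_⟩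
    simp only [mem_Ioi, not_lt] at hx
    simp [le_antisymm hx hx0]

lemma ell_pos {μ : Measure ℝ} [IsProbabilityMeasure μ]
    (hX : ∀ᵐ x : ℝ ∂μ, ∃ n : ℕ, x = n) (h0 : 0 < tailF μ 0) {x : ℝ} (hx : 0 < x) : 0 < ell μ x := by
  have hle : 0 ≤ᵐ[μ] fun y => min y x := by
    filter_upwards [ae_nonneg_of_lattice hX] with y hy
    exact le_min hy hx.le
  rw [ell_eq_integral_min hX hx.le, integral_pos_iff_support_of_nonneg_ae hle (integrable_min hX x)]
  refine lt_of_lt_of_le (ENNReal.toReal_pos_iff.1 h0).1 (measure_mono ?_)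
  intro y hy
  exact (lt_min hy hx).ne'

/-- Slow variation used in both directions: `ℓ(x / c) / ℓ(x) → 1`. -/
lemma tendsto_ell_div {μ : Measure ℝ} (hsv : SlowlyVarying (ell μ)) {c : ℝ} (hc : 1 < c) :
    Tendsto (fun x => ell μ (x / c) / ell μ x) atTop (𝓝 1) := by
  have h1 := (hsv.2 c hc).comp (tendsto_id.atTop_div_const (zero_lt_one.trans hc))
  have h2 := h1.inv₀ one_ne_zero
  rw [inv_one] at h2
  refine h2.congr fun x => ?_
  have : c ≠ 0 := by positivity
  simp [mul_div_cancel₀ _ this]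

lemma eventually_ell_div {μ : Measure ℝ} [IsProbabilityMeasure μ] (hsv : SlowlyVarying (ell μ))
    {c δ : ℝ} (hc : 1 < c) (hδ : δ < 1) : ∀ᶠ x in atTop, δ * ell μ x ≤ ell μ (x / c) := by
  filter_upwards [(tendsto_ell_div hsv hc).eventually (lt_mem_nhds hδ), hsv.1] with x hx hpos
  exact ((lt_div_iff₀ hpos).1 hx).le

/-- `x P[X > x] = o(ℓ(x))`. -/
lemma tendsto_mul_tailF_div_ell {μ : Measure ℝ} [IsProbabilityMeasure μ]
    (hsv : SlowlyVarying (ell μ)) :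
    Tendsto (fun x => x * tailF μ x / ell μ x) atTop (𝓝 0) := by
  have h := ((tendsto_ell_div hsv one_lt_two).const_sub 1).const_mul 2
  simp only [sub_self, mul_zero] at h
  refine squeeze_zero' ?_ ?_ h
  · filter_upwards [hsv.1, eventually_ge_atTop 0] with x hx hx0
    exact div_nonneg (mul_nonneg hx0 (tailF_nonneg μ x)) hx.le
  · filter_upwards [hsv.1, eventually_ge_atTop 0] with x hx hx0
    have := sub_mul_tailF_le μ (show x / 2 ≤ x by linarith)
    rw [div_le_iff₀ hx]
    have h3 : 2 * (1 - ell μ (x / 2) / ell μ x) * ell μ x = 2 * (ell μ x - ell μ (x / 2)) := by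
      field_simp
    rw [h3]
    nlinarith

/-! ### The characteristic function near the origin -/

/-- The scale `φ(θ) = θ ℓ(1/θ) = E[min(θX, 1)]` of `|1 - E[e^{iθX}]|` for `θ > 0`. -/
noncomputable def phi (μ : Measure ℝ) (θ : ℝ) : ℝ := θ * ell μ (1 / θ)

lemma phi_eq_integral {μ : Measure ℝ} [IsProbabilityMeasure μ]
    (hX : ∀ᵐ x : ℝ ∂μ, ∃ n : ℕ, x = n) {θ : ℝ} (hθ : 0 < θ) :
    phi μ θ = ∫ y, min (θ * y) 1 ∂μ := by
  rw [phi, ell_eq_integral_min hX (by positivity), ← integral_const_mul]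
  congr 1
  ext y
  rw [mul_min_of_nonneg _ _ hθ.le, mul_one_div_cancel hθ.ne']

lemma integrable_min_mul {μ : Measure ℝ} [IsProbabilityMeasure μ]
    (hX : ∀ᵐ x : ℝ ∂μ, ∃ n : ℕ, x = n) {θ : ℝ} (hθ : 0 < θ) :
    Integrable (fun y => min (θ * y) 1) μ := by
  refine ((integrable_min hX (1 / θ)).const_mul θ).congr (ae_of_all _ fun y => ?_)
  simp only
  rw [mul_min_of_nonneg _ _ hθ.le, mul_one_div_cancel hθ.ne']

lemma phi_mono {μ : Measure ℝ} [IsProbabilityMeasure μ]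
    (hX : ∀ᵐ x : ℝ ∂μ, ∃ n : ℕ, x = n) {a b : ℝ} (ha : 0 < a) (hab : a ≤ b) :
    phi μ a ≤ phi μ b := by
  rw [phi_eq_integral hX ha, phi_eq_integral hX (ha.trans_le hab)]
  refine integral_mono_ae (integrable_min_mul hX ha) (integrable_min_mul hX (ha.trans_le hab)) ?_
  filter_upwards [ae_nonneg_of_lattice hX] with y hy
  exact min_le_min_right _ (by gcongr)

lemma phi_le_one {μ : Measure ℝ} [IsProbabilityMeasure μ]
    (hX : ∀ᵐ x : ℝ ∂μ, ∃ n : ℕ, x = n) {a : ℝ} (ha : 0 < a) : phi μ a ≤ 1 := by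
  rw [phi_eq_integral hX ha]
  calc ∫ y, min (a * y) 1 ∂μ ≤ ∫ y, (1 : ℝ) ∂μ :=
        integral_mono (integrable_min_mul hX ha) (integrable_const _) (fun y => min_le_right _ _)
    _ = 1 := by simp

lemma phi_pos {μ : Measure ℝ} [IsProbabilityMeasure μ]
    (hX : ∀ᵐ x : ℝ ∂μ, ∃ n : ℕ, x = n) (h0 : 0 < tailF μ 0) {a : ℝ} (ha : 0 < a) :
    0 < phi μ a :=
  mul_pos ha (ell_pos hX h0 (by positivity))

lemma integrable_cexp (μ : Measure ℝ) [IsProbabilityMeasure μ] (θ : ℝ) :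
    Integrable (fun x : ℝ => Complex.exp (θ * x * Complex.I)) μ := by
  refine Integrable.of_bound (C := 1) (by fun_prop) (ae_of_all _ fun x => ?_)
  rw [← Complex.ofReal_mul, Complex.norm_exp_ofReal_mul_I]

/-- Modulus of continuity of the characteristic function. -/
lemma norm_charFun_sub_le {μ : Measure ℝ} [IsProbabilityMeasure μ]
    (hX : ∀ᵐ x : ℝ ∂μ, ∃ n : ℕ, x = n) (θ : ℝ) {h : ℝ} (hh : 0 < h) :
    ‖charFun μ θ - charFun μ (θ + h)‖ ≤ 2 * phi μ h := by
  rw [charFun_apply_real, charFun_apply_real, ← integral_sub (integrable_cexp μ _)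
    (by exact_mod_cast integrable_cexp μ (θ + h)), phi_eq_integral hX hh, ← integral_const_mul]
  refine norm_integral_le_of_norm_le ((integrable_min_mul hX hh).const_mul 2) ?_
  filter_upwards [ae_nonneg_of_lattice hX] with y hy
  have h1 : Complex.exp (θ * y * Complex.I) - Complex.exp (((θ + h : ℝ) : ℂ) * y * Complex.I) =
      -(Complex.exp ((θ * y : ℝ) * Complex.I) *
        (Complex.exp (Complex.I * ((h * y : ℝ) : ℂ)) - 1)) := by
    rw [mul_sub, ← Complex.exp_add]
    push_cast
    ring_nf
  rw [h1, norm_neg, norm_mul, Complex.norm_exp_ofReal_mul_I, one_mul]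
  rw [mul_min_of_nonneg _ _ zero_le_two]
  refine le_min ?_ ?_
  · refine Real.norm_exp_I_mul_ofReal_sub_one_le.trans ?_
    rw [Real.norm_eq_abs, abs_of_nonneg (by positivity)]
    nlinarith [mul_nonneg hh.le hy]
  · refine (norm_sub_le _ _).trans ?_
    rw [mul_comm, Complex.norm_exp_ofReal_mul_I]
    norm_num

lemma integrable_sin (μ : Measure ℝ) [IsProbabilityMeasure μ] (θ : ℝ) :
    Integrable (fun x : ℝ => Real.sin (θ * x)) μ := by
  refine Integrable.of_bound (C := 1) (by fun_prop) (ae_of_all _ fun x => ?_)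
  exact Real.abs_sin_le_one _

lemma charFun_im (μ : Measure ℝ) [IsProbabilityMeasure μ] (θ : ℝ) :
    (charFun μ θ).im = ∫ x, Real.sin (θ * x) ∂μ := by
  rw [charFun_apply_real]
  have := (integral_im (𝕜 := ℂ) (integrable_cexp μ θ)).symm
  simp only [RCLike.im_to_complex] at this
  rw [this]
  congr 1
  ext x
  rw [← Complex.ofReal_mul, Complex.exp_ofReal_mul_I_im]

lemma integrable_cos (μ : Measure ℝ) [IsProbabilityMeasure μ] (θ : ℝ) :
    Integrable (fun x : ℝ => Real.cos (θ * x)) μ := by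
  refine Integrable.of_bound (C := 1) (by fun_prop) (ae_of_all _ fun x => ?_)
  exact Real.abs_cos_le_one _

lemma charFun_re (μ : Measure ℝ) [IsProbabilityMeasure μ] (θ : ℝ) :
    (charFun μ θ).re = ∫ x, Real.cos (θ * x) ∂μ := by
  rw [charFun_apply_real]
  have := (integral_re (𝕜 := ℂ) (integrable_cexp μ θ)).symm
  simp only [RCLike.re_to_complex] at this
  rw [this]
  congr 1
  ext x
  rw [← Complex.ofReal_mul, Complex.exp_ofReal_mul_I_re]

/-- The imaginary part alone already has the right order; the tail term is `o(φ(θ))`. -/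
lemma le_charFun_im {μ : Measure ℝ} [IsProbabilityMeasure μ]
    (hX : ∀ᵐ x : ℝ ∂μ, ∃ n : ℕ, x = n) {θ : ℝ} (hθ : 0 < θ) :
    2 / Real.pi * phi μ θ - 2 * tailF μ (1 / θ) ≤ (charFun μ θ).im := by
  have hi : Integrable (fun y : ℝ => (Ioi (1 / θ)).indicator (fun _ => (1 : ℝ)) y) μ :=
    (integrable_const (1 : ℝ)).indicator measurableSet_Ioi
  rw [charFun_im, phi_eq_integral hX hθ, tailF_eq_integral, ← integral_const_mul,
    ← integral_const_mul, ← integral_sub ((integrable_min_mul hX hθ).const_mul _) (hi.const_mul _)]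
  refine integral_mono_ae (((integrable_min_mul hX hθ).const_mul _).sub (hi.const_mul _))
    (integrable_sin μ θ) ?_
  filter_upwards [ae_nonneg_of_lattice hX] with y hy
  have hpi := Real.pi_gt_three
  simp only [indicator_apply, mem_Ioi]
  by_cases hyx : 1 / θ < y
  · rw [if_pos hyx]
    have : 2 / Real.pi * min (θ * y) 1 ≤ 1 := by
      calc 2 / Real.pi * min (θ * y) 1 ≤ 2 / Real.pi * 1 := by
            gcongr; exact min_le_right _ _
        _ ≤ 1 := by rw [mul_one, div_le_one (by linarith)]; linarith
    linarith [Real.neg_one_le_sin (θ * y)]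
  · rw [if_neg hyx, mul_zero, sub_zero]
    have h1 : θ * y ≤ 1 := by
      have := not_lt.1 hyx
      rwa [le_div_iff₀ hθ, mul_comm] at this
    rw [min_eq_left h1]
    exact Real.mul_le_sin (by positivity) (by linarith)

/-- Span one means that the characteristic function is different from `1` on `(0, π]`. -/
lemma charFun_ne_one {μ : Measure ℝ} [IsProbabilityMeasure μ]
    (hX : ∀ᵐ x : ℝ ∂μ, ∃ n : ℕ, x = n)
    (hspan : ¬ ∃ d : ℕ, 2 ≤ d ∧ μ {x : ℝ | ∃ k : ℕ, x = (d * k : ℕ)} = 1)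
    {θ : ℝ} (hθ : 0 < θ) (hθ' : θ ≤ Real.pi) : charFun μ θ ≠ 1 := by
  intro h1
  have hcos : ∀ᵐ x ∂μ, Real.cos (θ * x) = 1 := by
    have h2 : ∫ x, (1 - Real.cos (θ * x)) ∂μ = 0 := by
      rw [integral_sub (integrable_const _) (integrable_cos μ θ), ← charFun_re, h1]
      simp
    have h3 := (integral_eq_zero_iff_of_nonneg (f := fun x => 1 - Real.cos (θ * x))
      (fun x => by simp [Real.cos_le_one]) ((integrable_const _).sub (integrable_cos μ θ))).1 h2
    filter_upwards [h3] with x hx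
    simp only [Pi.zero_apply] at hx
    linarith
  -- The integers `m` with `mθ ∈ 2πℤ` form a subgroup that carries the law of `X`.
  let H : AddSubgroup ℤ := (AddSubgroup.zmultiples (2 * Real.pi)).comap
    ((AddMonoidHom.mulLeft θ).comp (Int.castAddHom ℝ))
  have hH : ∀ m : ℤ, m ∈ H ↔ ∃ k : ℤ, (k : ℝ) * (2 * Real.pi) = θ * m := by
    intro m
    simp [H, AddSubgroup.mem_comap, AddSubgroup.mem_zmultiples_iff]
  obtain ⟨a, ha⟩ := Int.subgroup_cyclic H
  have hdvd : ∀ m : ℤ, m ∈ H ↔ a ∣ m := by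
    intro m
    rw [ha, ← AddSubgroup.zmultiples_eq_closure, Int.mem_zmultiples_iff]
  have hsupp : ∀ᵐ x : ℝ ∂μ, ∃ n : ℕ, x = n ∧ a.natAbs ∣ n := by
    filter_upwards [hX, hcos] with x ⟨n, hn⟩ hc
    refine ⟨n, hn, ?_⟩
    obtain ⟨k, hk⟩ := (Real.cos_eq_one_iff _).1 hc
    have : (n : ℤ) ∈ H := (hH n).2 ⟨k, by rw [hk, hn]; simp⟩
    exact Int.natCast_dvd_natCast.1 ((Int.natAbs_dvd).2 ((hdvd _).1 this))
  have key : ∀ d : ℕ, 2 ≤ d → ¬ d ∣ a.natAbs := by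
    intro d hd hda
    refine hspan ⟨d, hd, ?_⟩
    refine (prob_compl_eq_zero_iff₀ ?_).1 ?_
    · refine (Set.Countable.measurableSet ?_).nullMeasurableSet
      refine (countable_range (fun k : ℕ => ((d * k : ℕ) : ℝ))).mono ?_
      rintro x ⟨k, hk⟩; exact ⟨k, hk.symm⟩
    · refine measure_eq_zero_iff_ae_notMem.2 ?_
      filter_upwards [hsupp] with x ⟨n, hn, hna⟩
      simp only [mem_compl_iff, not_not]
      obtain ⟨k, hk⟩ := hda.trans hna
      exact ⟨k, by rw [hn, hk]⟩
  have ha1 : a.natAbs = 1 := by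
    by_contra hne
    rcases Nat.lt_or_ge a.natAbs 2 with h | h
    · have h0 : a.natAbs = 0 := by omega
      exact key 2 le_rfl (by simp [h0])
    · exact key _ h dvd_rfl
  have h1H : (1 : ℤ) ∈ H := (hdvd 1).2 (Int.natAbs_dvd.1 (by simp [ha1]))
  obtain ⟨k, hk⟩ := (hH 1).1 h1H
  have hpi := Real.pi_pos
  simp only [Int.cast_one, mul_one] at hk
  have hk0 : (0 : ℝ) < k := by
    by_contra hneg
    nlinarith [not_lt.1 hneg]
  have hk1 : (1 : ℝ) ≤ k := by
    have : (0 : ℤ) < k := by exact_mod_cast hk0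
    exact_mod_cast this
  nlinarith

/-- Near the origin by the estimate on the imaginary part, elsewhere by compactness. -/
lemma exists_phi_le {μ : Measure ℝ} [IsProbabilityMeasure μ]
    (hX : ∀ᵐ x : ℝ ∂μ, ∃ n : ℕ, x = n)
    (hspan : ¬ ∃ d : ℕ, 2 ≤ d ∧ μ {x : ℝ | ∃ k : ℕ, x = (d * k : ℕ)} = 1)
    (hsv : SlowlyVarying (ell μ)) :
    ∃ c : ℝ, 0 < c ∧ ∀ θ, 0 < θ → θ ≤ Real.pi → c * phi μ θ ≤ ‖1 - charFun μ θ‖ := by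
  have hpi := Real.pi_gt_three
  have h4 := Real.pi_le_four
  have hev : ∀ᶠ x in atTop, x * tailF μ x ≤ (1 / 8) * ell μ x := by
    filter_upwards [(tendsto_mul_tailF_div_ell hsv).eventually
      (gt_mem_nhds (show (0 : ℝ) < 1 / 8 by norm_num)), hsv.1] with x hx hpos
    exact ((div_lt_iff₀ hpos).1 hx).le
  obtain ⟨x0, hx0⟩ := eventually_atTop.1 hev
  set x1 := max x0 1
  have hx1 : 0 < x1 := lt_of_lt_of_le one_pos (le_max_right _ _)
  have hsmall : ∀ θ, 0 < θ → θ ≤ 1 / x1 → 1 / 4 * phi μ θ ≤ ‖1 - charFun μ θ‖ := by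
    intro θ hθ hθ1
    have hx : x0 ≤ 1 / θ := by
      refine (le_max_left x0 1).trans ?_
      rwa [le_div_iff₀ hθ, ← le_div_iff₀' hx1]
    have h1 := hx0 _ hx
    have h2 : tailF μ (1 / θ) ≤ 1 / 8 * phi μ θ := by
      rw [phi]
      calc tailF μ (1 / θ) = θ * (1 / θ * tailF μ (1 / θ)) := by field_simp
        _ ≤ θ * (1 / 8 * ell μ (1 / θ)) := by gcongr
        _ = _ := by ring
    have h3 := le_charFun_im hX hθ
    have h5 : (charFun μ θ).im ≤ ‖1 - charFun μ θ‖ := by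
      refine le_trans ?_ (Complex.abs_im_le_norm _)
      simp only [Complex.sub_im, Complex.one_im, zero_sub, abs_neg]
      exact le_abs_self _
    have h6 : 0 ≤ phi μ θ := mul_nonneg hθ.le (ell_nonneg μ (by positivity))
    have h7 : 1 / 2 ≤ 2 / Real.pi := by
      rw [div_le_div_iff₀ (by norm_num) (by linarith)]; linarith
    nlinarith
  obtain ⟨m, hm, hmin⟩ : ∃ m : ℝ, 0 < m ∧
      ∀ θ ∈ Icc (1 / x1) Real.pi, m ≤ ‖1 - charFun μ θ‖ := by
    have hne : (Icc (1 / x1) Real.pi).Nonempty := by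
      refine nonempty_Icc.2 (le_trans ?_ (show (1 : ℝ) ≤ Real.pi by linarith))
      rw [div_le_one hx1]; exact le_max_right _ _
    have hcont : Continuous fun θ => ‖1 - charFun μ θ‖ :=
      (continuous_const.sub continuous_charFun).norm
    obtain ⟨t, ht, htm⟩ := isCompact_Icc.exists_isMinOn hne hcont.continuousOn
    refine ⟨‖1 - charFun μ t‖, ?_, fun θ hθ => htm hθ⟩
    rw [norm_pos_iff, sub_ne_zero]
    exact (charFun_ne_one hX hspan (lt_of_lt_of_le (by positivity) ht.1) ht.2).symm
  refine ⟨min (1 / 4) m, by positivity, fun θ hθ hθpi => ?_⟩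
  have h6 : 0 ≤ phi μ θ := mul_nonneg hθ.le (ell_nonneg μ (by positivity))
  rcases le_total θ (1 / x1) with h | h
  · exact le_trans (by gcongr; exact min_le_left _ _) (hsmall θ hθ h)
  · calc min (1 / 4) m * phi μ θ ≤ m * 1 := by
          gcongr
          · exact min_le_right _ _
          · exact phi_le_one hX hθ
      _ ≤ _ := by rw [mul_one]; exact hmin θ ⟨h, hθpi⟩

lemma intervalIntegrable_inv_phi_sq {μ : Measure ℝ} [IsProbabilityMeasure μ]
    (hX : ∀ᵐ x : ℝ ∂μ, ∃ n : ℕ, x = n) (h0 : 0 < tailF μ 0) {a b : ℝ} (ha : 0 < a) (hb : 0 < b) :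
    IntervalIntegrable (fun θ => 1 / phi μ θ ^ 2) volume a b := by
  refine AntitoneOn.intervalIntegrable fun x hx y hy hxy => ?_
  have hx0 : 0 < x := lt_of_lt_of_le (lt_min ha hb) hx.1
  have := phi_pos hX h0 hx0
  have := phi_mono hX hx0 hxy
  gcongr

/-- Karamata-type bound, by dyadic induction: passing from `a` to `2a` multiplies
`a / φ(a)²` by at most `2/3` for small `a`, because `φ(2a)/φ(a) → 2`. -/
lemma exists_integral_inv_phi_sq_le {μ : Measure ℝ} [IsProbabilityMeasure μ]
    (hX : ∀ᵐ x : ℝ ∂μ, ∃ n : ℕ, x = n) (h0 : 0 < tailF μ 0)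
    (hsv : SlowlyVarying (ell μ)) :
    ∃ C : ℝ, 0 < C ∧ ∀ a, 0 < a → a ≤ Real.pi →
      ∫ θ in a..Real.pi, 1 / phi μ θ ^ 2 ≤ C * (a / phi μ a ^ 2) := by
  have hpi := Real.pi_pos
  have hmono : ∀ a b, 0 < a → a ≤ b → ∫ θ in a..b, 1 / phi μ θ ^ 2 ≤ (b - a) / phi μ a ^ 2 := by
    intro a b ha hab
    have hp := phi_pos hX h0 ha
    calc ∫ θ in a..b, 1 / phi μ θ ^ 2 ≤ ∫ θ in a..b, 1 / phi μ a ^ 2 := by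
          refine intervalIntegral.integral_mono_on hab
            (intervalIntegrable_inv_phi_sq hX h0 ha (ha.trans_le hab)) (by simp) fun θ hθ => ?_
          have := phi_mono hX ha hθ.1
          gcongr
      _ = _ := by simp; ring
  obtain ⟨x0, hx0⟩ := eventually_atTop.1
    (eventually_ell_div hsv one_lt_two (show (9 / 10 : ℝ) < 1 by norm_num))
  set x1 := max x0 1
  have hx1 : 0 < x1 := lt_of_lt_of_le one_pos (le_max_right _ _)
  set C := max 3 (Real.pi * (x1 + 1))
  have hC3 : 3 ≤ C := le_max_left _ _
  have hind : ∀ k : ℕ, ∀ a, 0 < a → a ≤ Real.pi → 1 / (x1 + 1) ≤ 2 ^ k * a →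
      ∫ θ in a..Real.pi, 1 / phi μ θ ^ 2 ≤ C * (a / phi μ a ^ 2) := by
    intro k
    induction k with
    | zero =>
      intro a ha hapi h
      have hp := phi_pos hX h0 ha
      refine (hmono a Real.pi ha hapi).trans ?_
      rw [← mul_div_assoc]
      gcongr
      have h2 : 1 ≤ (x1 + 1) * a := by
        rw [div_le_iff₀ (by positivity)] at h
        linarith
      calc Real.pi - a ≤ Real.pi * 1 := by linarith
        _ ≤ Real.pi * ((x1 + 1) * a) := by gcongr
        _ = Real.pi * (x1 + 1) * a := by ring
        _ ≤ C * a := by gcongr; exact le_max_right _ _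
    | succ k ih =>
      intro a ha hapi h
      by_cases hbig : 1 / (x1 + 1) ≤ 2 ^ k * a
      · exact ih a ha hapi hbig
      have ha1 : a < 1 / (x1 + 1) := by
        have : (1 : ℝ) ≤ 2 ^ k := one_le_pow₀ (by norm_num)
        nlinarith [not_le.1 hbig]
      have ha2 : 2 * a ≤ Real.pi := by
        have : 1 / (x1 + 1) ≤ 1 := by rw [div_le_one (by positivity)]; linarith
        linarith [Real.pi_gt_three]
      have ih2 := ih (2 * a) (by positivity) ha2 (by rw [pow_succ] at h; linarith)
      have hp := phi_pos hX h0 ha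
      have hx : x0 ≤ 1 / a := by
        rw [lt_div_iff₀ (by positivity)] at ha1
        rw [le_div_iff₀ ha]
        have := le_max_left x0 1
        nlinarith
      have hphi : 3 * phi μ a ^ 2 ≤ phi μ (2 * a) ^ 2 := by
        have h1 := hx0 _ hx
        have h2 : phi μ (2 * a) = 2 * a * ell μ (1 / a / 2) := by
          rw [phi]; congr 2; field_simp
        have h3 : 9 / 5 * phi μ a ≤ phi μ (2 * a) := by
          rw [h2, phi]
          nlinarith
        nlinarith
      rw [← intervalIntegral.integral_add_adjacent_intervals
        (intervalIntegrable_inv_phi_sq hX h0 ha (by positivity : 0 < 2 * a))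
        (intervalIntegrable_inv_phi_sq hX h0 (by positivity) hpi)]
      have h1 := hmono a (2 * a) ha (by linarith)
      have h2 : (2 * a - a) / phi μ a ^ 2 = a / phi μ a ^ 2 := by congr 1; ring
      have h3 : 2 * a / phi μ (2 * a) ^ 2 ≤ 2 * a / (3 * phi μ a ^ 2) := by gcongr
      have h4 : 2 * a / (3 * phi μ a ^ 2) = 2 / 3 * (a / phi μ a ^ 2) := by field_simp
      have h5 : 0 ≤ a / phi μ a ^ 2 := by positivity
      calc _ ≤ a / phi μ a ^ 2 + C * (2 / 3 * (a / phi μ a ^ 2)) := by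
            rw [h2] at h1
            rw [h4] at h3
            have : C * (2 * a / phi μ (2 * a) ^ 2) ≤ C * (2 / 3 * (a / phi μ a ^ 2)) := by gcongr
            linarith
        _ ≤ _ := by nlinarith
  refine ⟨C, by linarith, fun a ha hapi => ?_⟩
  obtain ⟨k, hk⟩ := pow_unbounded_of_one_lt (1 / (x1 + 1) / a) (one_lt_two (α := ℝ))
  exact hind k a ha hapi ((div_lt_iff₀ ha).1 hk).le

/-! ### Convolution powers and the renewal equation -/

lemma convPow_succ (μ : Measure ℝ) (j : ℕ) : convPow μ (j + 1) = convPow μ j ∗ μ := rfl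

instance isProbabilityMeasure_convPow (μ : Measure ℝ) [IsProbabilityMeasure μ] (j : ℕ) :
    IsProbabilityMeasure (convPow μ j) := by
  induction j with
  | zero => exact Measure.dirac.isProbabilityMeasure
  | succ j ih => rw [convPow_succ]; infer_instance

lemma charFun_convPow (μ : Measure ℝ) [IsProbabilityMeasure μ] (j : ℕ) (θ : ℝ) :
    charFun (convPow μ j) θ = charFun μ θ ^ j := by
  induction j with
  | zero => simp [convPow]
  | succ j ih => rw [convPow_succ, charFun_conv, ih, pow_succ]

lemma lattice_convPow {μ : Measure ℝ} [IsProbabilityMeasure μ]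
    (hX : ∀ᵐ x : ℝ ∂μ, ∃ n : ℕ, x = n) (j : ℕ) : ∀ᵐ x : ℝ ∂(convPow μ j), ∃ n : ℕ, x = n := by
  have hmeas : MeasurableSet {x : ℝ | ∃ n : ℕ, x = n} := by
    refine Set.Countable.measurableSet ((countable_range (fun k : ℕ => (k : ℝ))).mono ?_)
    rintro x ⟨k, hk⟩; exact ⟨k, hk.symm⟩
  induction j with
  | zero =>
    rw [convPow, ae_dirac_iff hmeas]
    exact ⟨0, by simp⟩
  | succ j ih =>
    rw [convPow, ae_map_iff (by fun_prop) hmeas]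
    filter_upwards [Measure.quasiMeasurePreserving_fst.ae ih,
      Measure.quasiMeasurePreserving_snd.ae hX] with p ⟨m, hm⟩ ⟨n, hn⟩
    exact ⟨m + n, by rw [hm, hn]; push_cast; rfl⟩

/-- `P[S_j = n]` as a real number. -/
noncomputable def massOf (μ : Measure ℝ) (j n : ℕ) : ℝ := (convPow μ j).real {(n : ℝ)}

lemma massOf_nonneg (μ : Measure ℝ) (j n : ℕ) : 0 ≤ massOf μ j n := measureReal_nonneg

lemma massOf_le_one (μ : Measure ℝ) [IsProbabilityMeasure μ] (j n : ℕ) : massOf μ j n ≤ 1 :=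
  measureReal_le_one

lemma integral_indicator_singleton (μ : Measure ℝ) [IsProbabilityMeasure μ] (j i : ℕ) :
    ∫ x, ({(i : ℝ)} : Set ℝ).indicator (fun _ => (1 : ℝ)) x ∂(convPow μ j) = massOf μ j i := by
  rw [integral_indicator_const _ (measurableSet_singleton _)]
  simp [massOf]

lemma integrable_indicator_singleton (μ : Measure ℝ) [IsProbabilityMeasure μ] (j i : ℕ) :
    Integrable (({(i : ℝ)} : Set ℝ).indicator (fun _ => (1 : ℝ))) (convPow μ j) :=
  (integrable_const (1 : ℝ)).indicator (measurableSet_singleton _)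

lemma tailF_convPow {μ : Measure ℝ} [IsProbabilityMeasure μ]
    (hX : ∀ᵐ x : ℝ ∂μ, ∃ n : ℕ, x = n) (j n : ℕ) :
    tailF (convPow μ j) n = 1 - ∑ i ∈ Finset.range (n + 1), massOf μ j i := by
  have h1 : (1 : ℝ) = ∫ x, (1 : ℝ) ∂(convPow μ j) := by simp
  rw [tailF_eq_integral]
  nth_rewrite 2 [h1]
  simp_rw [← integral_indicator_singleton]
  rw [← integral_finsetSum _ fun i _ => integrable_indicator_singleton μ j i,
    ← integral_sub (integrable_const _)
      (integrable_finsetSum _ fun i _ => integrable_indicator_singleton μ j i)]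
  refine integral_congr_ae ?_
  filter_upwards [lattice_convPow hX j] with x ⟨m, hm⟩
  subst hm
  simp only [indicator_apply, mem_Ioi, Nat.cast_lt, mem_singleton_iff, Nat.cast_inj,
    Finset.sum_ite_eq, Finset.mem_range]
  split_ifs <;> first | omega | simp

lemma tailF_conv (ν μ : Measure ℝ) [IsProbabilityMeasure μ] [IsProbabilityMeasure ν] (t : ℝ) :
    tailF (ν ∗ μ) t = ∫ x, tailF μ (t - x) ∂ν := by
  have hmeas : Measurable (fun p : ℝ × ℝ => p.1 + p.2) := by fun_prop
  rw [tailF, Measure.conv, Measure.map_apply hmeas measurableSet_Ioi,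
    Measure.prod_apply (hmeas measurableSet_Ioi)]
  have h : ∀ x : ℝ, Prod.mk x ⁻¹' ((fun p : ℝ × ℝ => p.1 + p.2) ⁻¹' Ioi t) = Ioi (t - x) := by
    intro x; ext y; simp [sub_lt_iff_lt_add']
  simp_rw [h]
  rw [← integral_toReal]
  · rfl
  · refine Measurable.aemeasurable ?_
    have := measurable_measure_prodMk_left (ν := μ) (hmeas (measurableSet_Ioi (a := t)))
    simpa only [h] using this
  · exact ae_of_all _ fun x => measure_lt_top _ _

/-- The event that the walk crosses level `n` at step `j + 1`, decomposed along `S_j`. -/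
lemma sum_massOf_mul_tailF {μ : Measure ℝ} [IsProbabilityMeasure μ]
    (hX : ∀ᵐ x : ℝ ∂μ, ∃ n : ℕ, x = n) (j n : ℕ) :
    ∑ i ∈ Finset.range (n + 1), massOf μ j i * tailF μ ((n - i : ℕ) : ℝ) =
      tailF (convPow μ (j + 1)) n - tailF (convPow μ j) n := by
  have hneg : ∀ t : ℝ, t < 0 → tailF μ t = 1 := by
    intro t ht
    rw [tailF, (prob_compl_eq_zero_iff measurableSet_Ioi).1 ?_, ENNReal.toReal_one]
    refine measure_eq_zero_iff_ae_notMem.2 ?_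
    filter_upwards [ae_nonneg_of_lattice hX] with x hx
    simp only [mem_compl_iff, not_not, mem_Ioi]
    linarith
  have hint : ∀ i ∈ Finset.range (n + 1), Integrable (fun x =>
      ({(i : ℝ)} : Set ℝ).indicator (fun _ => (1 : ℝ)) x * tailF μ ((n - i : ℕ) : ℝ))
      (convPow μ j) := fun i _ => (integrable_indicator_singleton μ j i).mul_const _
  have hI : Integrable (fun y => (Ioi (n : ℝ)).indicator (fun _ => (1 : ℝ)) y) (convPow μ j) :=
    (integrable_const (1 : ℝ)).indicator measurableSet_Ioi
  rw [eq_sub_iff_add_eq, convPow_succ, tailF_conv, tailF_eq_integral (convPow μ j)]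
  simp_rw [← integral_indicator_singleton, ← integral_mul_const]
  rw [← integral_finsetSum _ hint, ← integral_add (integrable_finsetSum _ hint) hI]
  refine integral_congr_ae ?_
  filter_upwards [lattice_convPow hX j] with x ⟨m, hm⟩
  subst hm
  simp only [indicator_apply, mem_Ioi, Nat.cast_lt, mem_singleton_iff, Nat.cast_inj, ite_mul,
    one_mul, zero_mul, Finset.sum_ite_eq, Finset.mem_range]
  by_cases hmn : m < n + 1
  · rw [if_pos hmn, if_neg (by omega), Nat.cast_sub (by omega), add_zero]
  · rw [if_neg hmn, if_pos (by omega), hneg, zero_add]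
    have : n + 1 ≤ m := by omega
    have : ((n + 1 : ℕ) : ℝ) ≤ m := by exact_mod_cast this
    push_cast at this
    linarith

lemma sum_sum_massOf_mul_tailF {μ : Measure ℝ} [IsProbabilityMeasure μ]
    (hX : ∀ᵐ x : ℝ ∂μ, ∃ n : ℕ, x = n) (J n : ℕ) :
    ∑ i ∈ Finset.range (n + 1), (∑ j ∈ Finset.range J, massOf μ j i) * tailF μ ((n - i : ℕ) : ℝ) =
      tailF (convPow μ J) n := by
  simp_rw [Finset.sum_mul]
  rw [Finset.sum_comm]
  simp_rw [sum_massOf_mul_tailF hX]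
  rw [Finset.sum_range_sub (fun j => tailF (convPow μ j) n)]
  have : tailF (convPow μ 0) n = 0 := by
    simp [tailF, convPow]
  rw [this, sub_zero]

lemma summable_massOf {μ : Measure ℝ} [IsProbabilityMeasure μ]
    (hX : ∀ᵐ x : ℝ ∂μ, ∃ n : ℕ, x = n) (h0 : 0 < tailF μ 0) (n : ℕ) :
    Summable (fun j => massOf μ j n) := by
  refine summable_of_sum_range_le (c := 1 / tailF μ 0) (fun j => massOf_nonneg μ j n) fun J => ?_
  rw [le_div_iff₀ h0]
  have h := sum_sum_massOf_mul_tailF hX J n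
  have h2 := tailF_le_one (convPow μ J) n
  have h3 := Finset.single_le_sum (s := Finset.range (n + 1))
    (f := fun i => (∑ j ∈ Finset.range J, massOf μ j i) * tailF μ ((n - i : ℕ) : ℝ))
    (fun i _ => mul_nonneg (Finset.sum_nonneg fun j _ => massOf_nonneg μ j i) (tailF_nonneg μ _))
    (Finset.mem_range.2 (Nat.lt_succ_self n))
  simp only [Nat.sub_self, Nat.cast_zero] at h3
  linarith

/-- The renewal mass function discounted by `r` per step, `Σ_j r^j P[S_j = n]`; the value `r = 1`
gives the renewal mass function itself. -/
noncomputable def renMass (μ : Measure ℝ) (r : ℝ) (n : ℕ) : ℝ := ∑' j : ℕ, r ^ j * massOf μ j n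

lemma renMass_one (μ : Measure ℝ) (n : ℕ) : renMass μ 1 n = ∑' j, massOf μ j n := by
  simp [renMass]

lemma toReal_renewal (μ : Measure ℝ) [IsProbabilityMeasure μ] (n : ℕ) :
    (renewal μ {(n : ℝ)}).toReal = renMass μ 1 n := by
  rw [renewal, ENNReal.tsum_toReal_eq fun j => measure_ne_top _ _, renMass_one]
  rfl

lemma renMass_nonneg (μ : Measure ℝ) {r : ℝ} (hr : 0 ≤ r) (n : ℕ) : 0 ≤ renMass μ r n :=
  tsum_nonneg fun j => mul_nonneg (pow_nonneg hr j) (massOf_nonneg μ j n)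

lemma renMass_le {μ : Measure ℝ} [IsProbabilityMeasure μ]
    (hX : ∀ᵐ x : ℝ ∂μ, ∃ n : ℕ, x = n) (h0 : 0 < tailF μ 0) {r : ℝ} (hr : 0 ≤ r) (hr1 : r ≤ 1)
    (n : ℕ) : renMass μ r n ≤ renMass μ 1 n := by
  have hle : ∀ j, r ^ j * massOf μ j n ≤ massOf μ j n := fun j =>
    mul_le_of_le_one_left (massOf_nonneg μ j n) (pow_le_one₀ hr hr1)
  rw [renMass_one]
  exact (Summable.of_nonneg_of_le
    (fun j => mul_nonneg (pow_nonneg hr j) (massOf_nonneg μ j n)) hle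
    (summable_massOf hX h0 n)).tsum_le_tsum hle (summable_massOf hX h0 n)

lemma tendsto_renMass {μ : Measure ℝ} [IsProbabilityMeasure μ]
    (hX : ∀ᵐ x : ℝ ∂μ, ∃ n : ℕ, x = n) (h0 : 0 < tailF μ 0) (n : ℕ) :
    Tendsto (fun r => renMass μ r n) (𝓝[<] 1) (𝓝 (renMass μ 1 n)) := by
  refine tendsto_tsum_of_dominated_convergence (summable_massOf hX h0 n) (fun j => ?_) ?_
  · have : Continuous fun r : ℝ => r ^ j * massOf μ j n := by fun_prop
    exact (this.tendsto 1).mono_left nhdsWithin_le_nhds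
  · have h1 : ∀ᶠ r : ℝ in 𝓝[<] 1, 0 < r :=
      nhdsWithin_le_nhds (lt_mem_nhds one_pos)
    filter_upwards [h1, self_mem_nhdsWithin] with r hr hr1 j
    rw [Real.norm_eq_abs, abs_of_nonneg (mul_nonneg (pow_nonneg hr.le j) (massOf_nonneg μ j n))]
    exact mul_le_of_le_one_left (massOf_nonneg μ j n) (pow_le_one₀ hr.le (le_of_lt hr1))

/-- The renewal equation: the walk crosses the level `n` almost surely. -/
lemma sum_renMass_mul_tailF {μ : Measure ℝ} [IsProbabilityMeasure μ]
    (hX : ∀ᵐ x : ℝ ∂μ, ∃ n : ℕ, x = n) (h0 : 0 < tailF μ 0) (n : ℕ) :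
    ∑ i ∈ Finset.range (n + 1), renMass μ 1 i * tailF μ ((n - i : ℕ) : ℝ) = 1 := by
  have h1 : Tendsto (fun J => ∑ i ∈ Finset.range (n + 1),
      (∑ j ∈ Finset.range J, massOf μ j i) * tailF μ ((n - i : ℕ) : ℝ)) atTop
      (𝓝 (∑ i ∈ Finset.range (n + 1), renMass μ 1 i * tailF μ ((n - i : ℕ) : ℝ))) := by
    refine tendsto_finsetSum _ fun i _ => Tendsto.mul_const _ ?_
    rw [renMass_one]
    exact (summable_massOf hX h0 i).hasSum.tendsto_sum_nat
  have h2 : Tendsto (fun J => tailF (convPow μ J) n) atTop (𝓝 (1 - ∑ i ∈ Finset.range (n + 1), 0)) := by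
    simp_rw [tailF_convPow hX]
    refine Tendsto.const_sub _ (tendsto_finsetSum _ fun i _ => ?_)
    exact (summable_massOf hX h0 i).tendsto_atTop_zero
  simp_rw [sum_sum_massOf_mul_tailF hX] at h1
  simpa using tendsto_nhds_unique h1 h2

/-- Upper bound `U(N) ≤ 2N / ℓ(N)`, from the renewal equation summed up to level `2N`. -/
lemma sum_renMass_mul_ell_le {μ : Measure ℝ} [IsProbabilityMeasure μ]
    (hX : ∀ᵐ x : ℝ ∂μ, ∃ n : ℕ, x = n) (h0 : 0 < tailF μ 0) (N : ℕ) :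
    (∑ i ∈ Finset.range N, renMass μ 1 i) * ell μ N ≤ 2 * N := by
  have h1 : ∑ n ∈ Finset.range (2 * N), ∑ i ∈ Finset.range (n + 1),
      renMass μ 1 i * tailF μ ((n - i : ℕ) : ℝ) = 2 * N := by
    simp_rw [sum_renMass_mul_tailF hX h0]; simp
  rw [← h1, ell_nat hX, Finset.sum_mul_sum, ← Finset.sum_product', Finset.sum_sigma']
  have hinj : InjOn (fun p : ℕ × ℕ => (⟨p.1 + p.2, p.1⟩ : Σ _ : ℕ, ℕ))
      (Finset.range N ×ˢ Finset.range N : Finset (ℕ × ℕ)) := by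
    rintro ⟨a, b⟩ _ ⟨a', b'⟩ _ h
    simp only [Sigma.mk.injEq, heq_eq_eq] at h
    ext <;> simp <;> omega
  calc ∑ p ∈ Finset.range N ×ˢ Finset.range N, renMass μ 1 p.1 * tailF μ p.2
      = ∑ x ∈ (Finset.range N ×ˢ Finset.range N).image
          (fun p : ℕ × ℕ => (⟨p.1 + p.2, p.1⟩ : Σ _ : ℕ, ℕ)),
          renMass μ 1 x.2 * tailF μ ((x.1 - x.2 : ℕ) : ℝ) := by
        rw [Finset.sum_image hinj]
        simp
    _ ≤ _ := by
        refine Finset.sum_le_sum_of_subset_of_nonneg ?_ fun x _ _ =>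
          mul_nonneg (renMass_nonneg μ zero_le_one _) (tailF_nonneg μ _)
        intro x hx
        simp only [Finset.mem_image, Finset.mem_product, Finset.mem_range, Prod.exists] at hx
        obtain ⟨a, b, ⟨ha, hb⟩, rfl⟩ := hx
        simp only [Finset.mem_sigma, Finset.mem_range]
        omega

/-! ### Fourier inversion for the discounted renewal mass function -/

lemma integral_cos_int_mul {k : ℤ} (hk : k ≠ 0) : ∫ θ in (0 : ℝ)..Real.pi, Real.cos (k * θ) = 0 := by
  have hk' : (k : ℝ) ≠ 0 := by exact_mod_cast hk
  rw [intervalIntegral.integral_comp_mul_left (fun x => Real.cos x) hk', integral_cos]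
  simp [Real.sin_int_mul_pi]

/-- The value of `∫₀^π cos(nθ)² dθ`. -/
noncomputable def cosWeight (n : ℕ) : ℝ := if n = 0 then Real.pi else Real.pi / 2

lemma cosWeight_le (n : ℕ) : cosWeight n ≤ Real.pi := by
  have := Real.pi_pos
  unfold cosWeight; split_ifs <;> linarith

lemma integral_cos_mul_cos (m n : ℕ) :
    ∫ θ in (0 : ℝ)..Real.pi, Real.cos (θ * m) * Real.cos (n * θ) =
      if m = n then cosWeight n else 0 := by
  have h : ∀ θ : ℝ, Real.cos (θ * m) * Real.cos (n * θ) =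
      (1 / 2) * Real.cos (((m - n : ℤ) : ℝ) * θ) + (1 / 2) * Real.cos (((m + n : ℤ) : ℝ) * θ) := by
    intro θ
    have h1 : ((m - n : ℤ) : ℝ) * θ = θ * m - n * θ := by push_cast; ring
    have h2 : ((m + n : ℤ) : ℝ) * θ = θ * m + n * θ := by push_cast; ring
    rw [h1, h2, Real.cos_sub, Real.cos_add]; ring
  simp_rw [h]
  rw [intervalIntegral.integral_add
    (Continuous.intervalIntegrable (by fun_prop) _ _)
    (Continuous.intervalIntegrable (by fun_prop) _ _),
    intervalIntegral.integral_const_mul, intervalIntegral.integral_const_mul]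
  by_cases hmn : m = n
  · subst hmn
    rw [if_pos rfl, cosWeight]
    by_cases hm : m = 0
    · subst hm; simp; ring
    · rw [if_neg hm, integral_cos_int_mul (k := (m + m : ℤ)) (by omega)]
      simp; ring
  · rw [if_neg hmn, integral_cos_int_mul (by omega), integral_cos_int_mul (by omega)]
    simp

lemma integral_re_pow_mul_cos {μ : Measure ℝ} [IsProbabilityMeasure μ]
    (hX : ∀ᵐ x : ℝ ∂μ, ∃ n : ℕ, x = n) (j n : ℕ) :
    ∫ θ in (0 : ℝ)..Real.pi, (charFun μ θ ^ j).re * Real.cos (n * θ) =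
      cosWeight n * massOf μ j n := by
  simp_rw [← charFun_convPow, charFun_re, ← integral_mul_const]
  rw [intervalIntegral_integral_swap, ← integral_indicator_singleton, ← integral_const_mul]
  · refine integral_congr_ae ?_
    filter_upwards [lattice_convPow hX j] with x ⟨m, hm⟩
    subst hm
    simp only [integral_cos_mul_cos, indicator_apply, mem_singleton_iff, Nat.cast_inj]
    split_ifs <;> simp
  · have : IsFiniteMeasure (volume.restrict (uIoc (0 : ℝ) Real.pi)) := by
      rw [uIoc_of_le Real.pi_pos.le]; infer_instance
    refine Integrable.of_bound (C := 1) ?_ (ae_of_all _ fun p => ?_)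
    · exact Continuous.aestronglyMeasurable (by unfold Function.uncurry; fun_prop)
    · simp only [Function.uncurry, norm_mul, Real.norm_eq_abs]
      exact mul_le_one₀ (Real.abs_cos_le_one _) (abs_nonneg _) (Real.abs_cos_le_one _)

/-- Real part of the transform `1 / (1 - r f)` of the discounted renewal mass function, where `f` is
the characteristic function of `X`. -/
noncomputable def greenRe (μ : Measure ℝ) (r θ : ℝ) : ℝ := ((1 - r * charFun μ θ)⁻¹).re

lemma norm_mul_charFun_le (μ : Measure ℝ) [IsProbabilityMeasure μ] {r : ℝ} (hr : 0 ≤ r) (θ : ℝ) :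
    ‖(r : ℂ) * charFun μ θ‖ ≤ r := by
  rw [norm_mul, Complex.norm_real, Real.norm_eq_abs, abs_of_nonneg hr]
  exact mul_le_of_le_one_right hr (norm_charFun_le_one _)

lemma one_sub_le_re (μ : Measure ℝ) [IsProbabilityMeasure μ] {r : ℝ} (hr : 0 ≤ r) (θ : ℝ) :
    1 - r ≤ (1 - r * charFun μ θ).re := by
  have h := (Complex.abs_re_le_norm _).trans (norm_mul_charFun_le μ hr θ)
  have h2 := (abs_le.1 h).2
  simp only [Complex.sub_re, Complex.one_re]
  linarith

lemma one_sub_ne_zero' (μ : Measure ℝ) [IsProbabilityMeasure μ] {r : ℝ} (hr : 0 ≤ r) (hr1 : r < 1)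
    (θ : ℝ) : 1 - r * charFun μ θ ≠ 0 := by
  intro h
  have := one_sub_le_re μ hr θ
  rw [h] at this
  simp at this
  linarith

lemma greenRe_nonneg (μ : Measure ℝ) [IsProbabilityMeasure μ] {r : ℝ} (hr : 0 ≤ r) (hr1 : r < 1)
    (θ : ℝ) : 0 ≤ greenRe μ r θ := by
  rw [greenRe, Complex.inv_re]
  exact div_nonneg (by linarith [one_sub_le_re μ hr θ]) (Complex.normSq_nonneg _)

lemma continuous_greenRe (μ : Measure ℝ) [IsProbabilityMeasure μ] {r : ℝ} (hr : 0 ≤ r)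
    (hr1 : r < 1) : Continuous (greenRe μ r) := by
  refine Complex.continuous_re.comp (Continuous.inv₀ ?_ (one_sub_ne_zero' μ hr hr1))
  exact continuous_const.sub (continuous_const.mul continuous_charFun)

/-- Discounting costs at most a factor two, uniformly in `r`. -/
lemma norm_one_sub_charFun_le (μ : Measure ℝ) [IsProbabilityMeasure μ] {r : ℝ} (hr : 0 ≤ r)
    (hr1 : r < 1) (θ : ℝ) : ‖1 - charFun μ θ‖ ≤ 2 * ‖1 - r * charFun μ θ‖ := by
  have h1 : 1 - charFun μ θ = (1 - r * charFun μ θ) - ((1 - r : ℝ) : ℂ) * charFun μ θ := by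
    push_cast; ring
  have h2 : ‖((1 - r : ℝ) : ℂ) * charFun μ θ‖ ≤ 1 - r :=
    norm_mul_charFun_le μ (by linarith) θ
  have h3 : 1 - r ≤ ‖1 - r * charFun μ θ‖ :=
    (one_sub_le_re μ hr θ).trans (Complex.re_le_norm _)
  rw [h1]
  refine (norm_sub_le _ _).trans ?_
  linarith

/-- Fourier inversion. Since `S_j ≥ 0`, the real part of the transform suffices. -/
lemma integral_greenRe_mul_cos {μ : Measure ℝ} [IsProbabilityMeasure μ]
    (hX : ∀ᵐ x : ℝ ∂μ, ∃ n : ℕ, x = n) {r : ℝ} (hr : 0 ≤ r) (hr1 : r < 1) (n : ℕ) :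
    ∫ θ in (0 : ℝ)..Real.pi, greenRe μ r θ * Real.cos (n * θ) = cosWeight n * renMass μ r n := by
  have hs := intervalIntegral.hasSum_integral_of_dominated_convergence (μ := volume)
    (a := (0 : ℝ)) (b := Real.pi)
    (F := fun j θ => r ^ j * ((charFun μ θ ^ j).re * Real.cos (n * θ)))
    (f := fun θ => greenRe μ r θ * Real.cos (n * θ)) (fun j _ => r ^ j) ?_ ?_ ?_ ?_ ?_
  · rw [renMass, ← tsum_mul_left, ← hs.tsum_eq]
    congr 1
    ext j
    rw [intervalIntegral.integral_const_mul, integral_re_pow_mul_cos hX]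
    ring
  · intro j
    have h : Continuous (charFun μ) := continuous_charFun
    exact Continuous.aestronglyMeasurable
      (continuous_const.mul ((Complex.continuous_re.comp (h.pow j)).mul (by fun_prop)))
  · refine fun j => ae_of_all _ fun θ _ => ?_
    rw [norm_mul, norm_mul, Real.norm_eq_abs, abs_of_nonneg (pow_nonneg hr j)]
    refine mul_le_of_le_one_right (pow_nonneg hr j) ?_
    refine mul_le_one₀ ?_ (norm_nonneg _) (Real.abs_cos_le_one _)
    refine (Complex.abs_re_le_norm _).trans ?_
    rw [norm_pow]
    exact pow_le_one₀ (norm_nonneg _) (norm_charFun_le_one _)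
  · exact ae_of_all _ fun θ _ => summable_geometric_of_lt_one hr hr1
  · simp
  · refine ae_of_all _ fun θ _ => ?_
    have h1 := hasSum_geometric_of_norm_lt_one
      (lt_of_le_of_lt (norm_mul_charFun_le μ hr θ) hr1)
    have h2 := (Complex.hasSum_re h1).mul_right (Real.cos (n * θ))
    have h3 : (fun j : ℕ => r ^ j * ((charFun μ θ ^ j).re * Real.cos (n * θ))) =
        fun j : ℕ => ((r * charFun μ θ) ^ j).re * Real.cos (n * θ) := by
      funext j
      rw [mul_pow, ← Complex.ofReal_pow, Complex.re_ofReal_mul, mul_assoc]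
    rw [h3]
    exact h2

/-! ### Low frequencies -/

lemma sum_comp_le {v : ℕ → ℝ} (hv : ∀ k, 0 ≤ v k) {s : Finset ℕ} {N : ℕ} {e : ℕ → ℕ}
    (he : InjOn e s) (hm : ∀ x ∈ s, e x < N) :
    ∑ x ∈ s, v (e x) ≤ ∑ k ∈ Finset.range N, v k := by
  rw [← Finset.sum_image (f := v) he]
  refine Finset.sum_le_sum_of_subset_of_nonneg ?_ fun k _ _ => hv k
  intro y hy
  obtain ⟨x, hx, rfl⟩ := Finset.mem_image.1 hy
  exact Finset.mem_range.2 (hm x hx)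

lemma sum_absdiff_le {v : ℕ → ℝ} (hv : ∀ k, 0 ≤ v k) {N m : ℕ} (hm : m < N) :
    ∑ l ∈ Finset.range N, v ((m - l) + (l - m)) ≤ 2 * ∑ k ∈ Finset.range N, v k := by
  rw [← Finset.sum_filter_add_sum_filter_not (Finset.range N) (fun l => l ≤ m), two_mul]
  refine add_le_add (sum_comp_le hv (e := fun l => (m - l) + (l - m)) ?_ ?_)
    (sum_comp_le hv (e := fun l => (m - l) + (l - m)) ?_ ?_)
  · intro a ha b hb h
    simp at ha hb h
    omega
  · intro a ha
    simp at ha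
    omega
  · intro a ha b hb h
    simp at ha hb h
    omega
  · intro a ha
    simp at ha
    omega

lemma cos_absdiff (m l : ℕ) (θ : ℝ) : Real.cos (((m - l) + (l - m) : ℕ) * θ) =
    Real.cos (m * θ) * Real.cos (l * θ) + Real.sin (m * θ) * Real.sin (l * θ) := by
  rw [← Real.cos_sub]
  rcases le_total l m with h | h
  · rw [Nat.sub_eq_zero_of_le h, add_zero, Nat.cast_sub h]; ring_nf
  · rw [Nat.sub_eq_zero_of_le h, zero_add, Nat.cast_sub h, ← Real.cos_neg]; ring_nf

/-- The real part being nonnegative, its mass near the origin is controlled by testing against the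
Fejér kernel `|Σ_{m<N} e^{imθ}|²`, hence by the renewal function at `N`. -/
lemma integral_greenRe_low_le {μ : Measure ℝ} [IsProbabilityMeasure μ]
    (hX : ∀ᵐ x : ℝ ∂μ, ∃ n : ℕ, x = n) (h0 : 0 < tailF μ 0) {r : ℝ} (hr : 0 ≤ r) (hr1 : r < 1)
    {N : ℕ} (hN : 0 < N) :
    ∫ θ in (0 : ℝ)..(1 / N), greenRe μ r θ ≤ 16 * Real.pi / ell μ N := by
  have hpi := Real.pi_gt_three
  have hNr : (1 : ℝ) ≤ N := by exact_mod_cast hN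
  have hg := continuous_greenRe μ hr hr1
  have hell : 0 < ell μ N := ell_pos hX h0 (by positivity)
  set K : ℝ → ℝ := fun θ => ∑ m ∈ Finset.range N, ∑ l ∈ Finset.range N,
    Real.cos (((m - l) + (l - m) : ℕ) * θ) with hK
  have hKcont : Continuous K := by fun_prop
  have hKsq : ∀ θ, K θ = (∑ m ∈ Finset.range N, Real.cos (m * θ)) ^ 2 +
      (∑ m ∈ Finset.range N, Real.sin (m * θ)) ^ 2 := by
    intro θ
    simp only [hK, cos_absdiff, Finset.sum_add_distrib, sq, Finset.sum_mul_sum]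
  have hKnn : ∀ θ, 0 ≤ K θ := fun θ => by rw [hKsq]; positivity
  have h1N : (1 : ℝ) / N ≤ 1 := by rw [div_le_one (by positivity)]; exact hNr
  have hKlow : ∀ θ ∈ Icc (0 : ℝ) (1 / N), (N : ℝ) ^ 2 / 4 ≤ K θ := by
    intro θ hθ
    have h1 : (N : ℝ) * (1 / 2) ≤ ∑ m ∈ Finset.range N, Real.cos (m * θ) := by
      have : ∑ m ∈ Finset.range N, (1 / 2 : ℝ) ≤ ∑ m ∈ Finset.range N, Real.cos (m * θ) := by
        refine Finset.sum_le_sum fun m hm => ?_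
        have hmN : (m : ℝ) ≤ N := by exact_mod_cast (Finset.mem_range.1 hm).le
        have hmθ : (m : ℝ) * θ ≤ 1 := by
          calc (m : ℝ) * θ ≤ N * (1 / N) := by
                apply mul_le_mul hmN hθ.2 hθ.1 (by positivity)
            _ = 1 := by field_simp
        have hmθ0 : 0 ≤ (m : ℝ) * θ := mul_nonneg (by positivity) hθ.1
        have := Real.one_sub_sq_div_two_le_cos (x := m * θ)
        nlinarith
      simpa using this
    rw [hKsq]
    nlinarith [sq_nonneg (∑ m ∈ Finset.range N, Real.sin (m * θ))]
  have hii : ∀ a b, IntervalIntegrable (fun θ => greenRe μ r θ * K θ) volume a b := fun a b =>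
    (hg.mul hKcont).intervalIntegrable a b
  have hupper : ∫ θ in (0 : ℝ)..Real.pi, greenRe μ r θ * K θ ≤
      2 * Real.pi * N * ∑ k ∈ Finset.range N, renMass μ 1 k := by
    have : ∫ θ in (0 : ℝ)..Real.pi, greenRe μ r θ * K θ =
        ∑ m ∈ Finset.range N, ∑ l ∈ Finset.range N,
          cosWeight ((m - l) + (l - m)) * renMass μ r ((m - l) + (l - m)) := by
      simp only [hK, Finset.mul_sum]
      rw [intervalIntegral.integral_finsetSum]
      · refine Finset.sum_congr rfl fun m _ => ?_
        rw [intervalIntegral.integral_finsetSum]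
        · exact Finset.sum_congr rfl fun l _ => integral_greenRe_mul_cos hX hr hr1 _
        · exact fun l _ => Continuous.intervalIntegrable (by fun_prop) _ _
      · exact fun m _ => Continuous.intervalIntegrable (by fun_prop) _ _
    rw [this]
    calc _ ≤ ∑ m ∈ Finset.range N, ∑ l ∈ Finset.range N,
          Real.pi * renMass μ 1 ((m - l) + (l - m)) := by
          refine Finset.sum_le_sum fun m _ => Finset.sum_le_sum fun l _ => ?_
          exact mul_le_mul (cosWeight_le _) (renMass_le hX h0 hr hr1.le _)
            (renMass_nonneg μ hr _) (by positivity)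
      _ ≤ ∑ m ∈ Finset.range N, Real.pi * (2 * ∑ k ∈ Finset.range N, renMass μ 1 k) := by
          refine Finset.sum_le_sum fun m hm => ?_
          rw [← Finset.mul_sum]
          gcongr
          exact sum_absdiff_le (fun k => renMass_nonneg μ zero_le_one k) (Finset.mem_range.1 hm)
      _ = _ := by simp; ring
  have hlower : (N : ℝ) ^ 2 / 4 * ∫ θ in (0 : ℝ)..(1 / N), greenRe μ r θ ≤
      ∫ θ in (0 : ℝ)..Real.pi, greenRe μ r θ * K θ := by
    rw [← intervalIntegral.integral_const_mul]
    calc ∫ θ in (0 : ℝ)..(1 / N), (N : ℝ) ^ 2 / 4 * greenRe μ r θ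
        ≤ ∫ θ in (0 : ℝ)..(1 / N), greenRe μ r θ * K θ := by
          refine intervalIntegral.integral_mono_on (by positivity)
            (Continuous.intervalIntegrable (by fun_prop) _ _) (hii _ _) fun θ hθ => ?_
          nlinarith [hKlow θ hθ, greenRe_nonneg μ hr hr1 θ]
      _ ≤ _ := by
          rw [← intervalIntegral.integral_add_adjacent_intervals (hii 0 (1 / N))
            (hii (1 / N) Real.pi)]
          have : 0 ≤ ∫ θ in (1 / N : ℝ)..Real.pi, greenRe μ r θ * K θ :=
            intervalIntegral.integral_nonneg (by linarith)
              (fun θ _ => mul_nonneg (greenRe_nonneg μ hr hr1 θ) (hKnn θ))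
          linarith
  have hU := sum_renMass_mul_ell_le hX h0 N
  set U := ∑ k ∈ Finset.range N, renMass μ 1 k
  set I := ∫ θ in (0 : ℝ)..(1 / N), greenRe μ r θ
  rw [le_div_iff₀ hell]
  have h2 : (N : ℝ) ^ 2 / 4 * (I * ell μ N) ≤ (N : ℝ) ^ 2 / 4 * (16 * Real.pi) := by
    calc (N : ℝ) ^ 2 / 4 * (I * ell μ N) = ((N : ℝ) ^ 2 / 4 * I) * ell μ N := by ring
      _ ≤ (2 * Real.pi * N * U) * ell μ N :=
        mul_le_mul_of_nonneg_right (hlower.trans hupper) hell.le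
      _ = 2 * Real.pi * N * (U * ell μ N) := by ring
      _ ≤ 2 * Real.pi * N * (2 * N) := by gcongr
      _ = (N : ℝ) ^ 2 / 4 * (16 * Real.pi) := by ring
  exact le_of_mul_le_mul_left h2 (by positivity)

/-! ### High frequencies -/

lemma abs_greenRe_le {μ : Measure ℝ} [IsProbabilityMeasure μ]
    {c : ℝ} (hc : 0 < c) {r : ℝ} (hr : 0 ≤ r) (hr1 : r < 1) {θ : ℝ}
    (h : c * phi μ θ ≤ ‖1 - charFun μ θ‖) (hp : 0 < phi μ θ) :
    ‖(1 - r * charFun μ θ)⁻¹‖ ≤ 2 / (c * phi μ θ) := by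
  rw [norm_inv, inv_le_comm₀ (norm_pos_iff.2 (one_sub_ne_zero' μ hr hr1 θ)) (by positivity),
    inv_div, div_le_iff₀ two_pos]
  linarith [norm_one_sub_charFun_le μ hr hr1 θ]

/-- Shifting the variable by `h = π / n` changes the sign of `cos(nθ)`, so the oscillating integral
is governed by the increments of the integrand over `h` and by two boundary pieces. -/
lemma exists_integral_high_le {μ : Measure ℝ} [IsProbabilityMeasure μ]
    (hX : ∀ᵐ x : ℝ ∂μ, ∃ n : ℕ, x = n)
    (hspan : ¬ ∃ d : ℕ, 2 ≤ d ∧ μ {x : ℝ | ∃ k : ℕ, x = (d * k : ℕ)} = 1)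
    (hsv : SlowlyVarying (ell μ)) :
    ∃ K : ℝ, 0 < K ∧ ∀ r, 0 ≤ r → r < 1 → ∀ n : ℕ, 0 < n → ∀ a : ℝ, 0 < a →
      a + Real.pi / n ≤ Real.pi →
      |∫ θ in a..Real.pi, greenRe μ r θ * Real.cos (n * θ)| ≤
        K * (Real.pi / n / phi μ a + phi μ (Real.pi / n) * (a / phi μ a ^ 2)) := by
  have h0 := tailF_zero_pos hX hspan
  obtain ⟨c, hc, hlow⟩ := exists_phi_le hX hspan hsv
  obtain ⟨C, hC, hint⟩ := exists_integral_inv_phi_sq_le hX h0 hsv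
  refine ⟨max (2 / c) (4 / c ^ 2 * C), by positivity, fun r hr hr1 n hn a ha hah => ?_⟩
  have hpi := Real.pi_pos
  set h := Real.pi / n with hh
  have hnr : (0 : ℝ) < n := by exact_mod_cast hn
  have hhpos : 0 < h := by positivity
  have hg := continuous_greenRe μ hr hr1
  have hpa := phi_pos hX h0 ha
  have hph := phi_pos hX h0 hhpos
  set G : ℝ → ℝ := fun θ => greenRe μ r θ * Real.cos (n * θ) with hG
  have hGc : Continuous G := by fun_prop
  have hGi : ∀ x y, IntervalIntegrable G volume x y := fun x y => hGc.intervalIntegrable x y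
  have hbound : ∀ θ, a ≤ θ → θ ≤ Real.pi → ‖G θ‖ ≤ 2 / (c * phi μ a) := by
    intro θ h1 h2
    have hθ : 0 < θ := ha.trans_le h1
    have hpθ := phi_pos hX h0 hθ
    rw [hG, norm_mul]
    calc ‖greenRe μ r θ‖ * ‖Real.cos (n * θ)‖ ≤ (2 / (c * phi μ θ)) * 1 := by
          refine mul_le_mul ?_ (Real.abs_cos_le_one _) (norm_nonneg _) (by positivity)
          exact (Complex.abs_re_le_norm _).trans (abs_greenRe_le hc hr hr1 (hlow θ hθ h2) hpθ)
      _ ≤ 2 / (c * phi μ a) := by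
          rw [mul_one]
          have := phi_mono hX ha h1
          gcongr
  have hshift : ∫ θ in (a + h)..Real.pi, G θ =
      -∫ θ in a..(Real.pi - h), greenRe μ r (θ + h) * Real.cos (n * θ) := by
    have := intervalIntegral.integral_comp_add_right (a := a) (b := Real.pi - h) G h
    rw [sub_add_cancel] at this
    rw [← this, ← intervalIntegral.integral_neg]
    congr 1
    ext θ
    have : (n : ℝ) * (θ + h) = n * θ + Real.pi := by rw [hh]; field_simp
    simp only [hG]
    rw [this, Real.cos_add_pi]; ring
  have e1 := intervalIntegral.integral_add_adjacent_intervals (hGi a (Real.pi - h))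
    (hGi (Real.pi - h) Real.pi)
  have e2 := intervalIntegral.integral_add_adjacent_intervals (hGi a (a + h))
    (hGi (a + h) Real.pi)
  have b1 : ‖∫ θ in (Real.pi - h)..Real.pi, G θ‖ ≤ 2 / (c * phi μ a) * h := by
    have := intervalIntegral.norm_integral_le_of_norm_le_const (a := Real.pi - h) (b := Real.pi)
      (f := G) (C := 2 / (c * phi μ a)) fun θ hθ => by
        rw [uIoc_of_le (by linarith)] at hθ
        exact hbound θ (by linarith [hθ.1]) hθ.2
    simpa [abs_of_pos hhpos] using this
  have b2 : ‖∫ θ in a..(a + h), G θ‖ ≤ 2 / (c * phi μ a) * h := by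
    have := intervalIntegral.norm_integral_le_of_norm_le_const (a := a) (b := a + h)
      (f := G) (C := 2 / (c * phi μ a)) fun θ hθ => by
        rw [uIoc_of_le (by linarith)] at hθ
        exact hbound θ hθ.1.le (by linarith [hθ.2])
    simpa [abs_of_pos hhpos] using this
  have b3 : ‖∫ θ in a..(Real.pi - h), (G θ - greenRe μ r (θ + h) * Real.cos (n * θ))‖ ≤
      8 * phi μ h / c ^ 2 * (C * (a / phi μ a ^ 2)) := by
    have hii := intervalIntegrable_inv_phi_sq hX h0 ha (show 0 < Real.pi - h by linarith)
    refine (intervalIntegral.norm_integral_le_of_norm_le (by linarith)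
      (g := fun θ => 8 * phi μ h / c ^ 2 * (1 / phi μ θ ^ 2)) (ae_of_all _ fun θ hθ => ?_)
      (hii.const_mul _)).trans ?_
    · have hθ0 : 0 < θ := ha.trans hθ.1
      have hp1 := phi_pos hX h0 hθ0
      have hp2 := phi_pos hX h0 (show 0 < θ + h by linarith)
      have hp3 := phi_mono hX hθ0 (show θ ≤ θ + h by linarith)
      have n1 := one_sub_ne_zero' μ hr hr1 θ
      have n2 := one_sub_ne_zero' μ hr hr1 (θ + h)
      have i1 := abs_greenRe_le hc hr hr1 (hlow θ hθ0 (by linarith [hθ.2])) hp1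
      have i2 := abs_greenRe_le hc hr hr1 (hlow (θ + h) (by linarith) (by linarith [hθ.2])) hp2
      have i3 : 2 / (c * phi μ (θ + h)) ≤ 2 / (c * phi μ θ) := by gcongr
      have hd : G θ - greenRe μ r (θ + h) * Real.cos (n * θ) =
          (r * (charFun μ θ - charFun μ (θ + h)) * (1 - r * charFun μ θ)⁻¹ *
            (1 - r * charFun μ (θ + h))⁻¹).re * Real.cos (n * θ) := by
        rw [hG]
        simp only
        rw [← sub_mul, greenRe, greenRe, ← Complex.sub_re, inv_sub_inv n1 n2]
        congr 2
        field_simp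
        ring
      rw [hd, norm_mul]
      have hmod := norm_charFun_sub_le hX θ hhpos
      calc _ ≤ (1 * (2 * phi μ h) * (2 / (c * phi μ θ)) * (2 / (c * phi μ θ))) * 1 := by
            refine mul_le_mul ?_ (Real.abs_cos_le_one _) (norm_nonneg _) (by positivity)
            refine (Complex.abs_re_le_norm _).trans ?_
            rw [norm_mul, norm_mul, norm_mul, Complex.norm_real, Real.norm_eq_abs,
              abs_of_nonneg hr]
            gcongr
            exact i2.trans i3
        _ = _ := by field_simp; ring
    · rw [intervalIntegral.integral_const_mul]
      refine mul_le_mul_of_nonneg_left ?_ (by positivity)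
      refine le_trans ?_ (hint a ha (by linarith))
      rw [← intervalIntegral.integral_add_adjacent_intervals hii
        (intervalIntegrable_inv_phi_sq hX h0 (show 0 < Real.pi - h by linarith) hpi)]
      have : 0 ≤ ∫ θ in (Real.pi - h)..Real.pi, 1 / phi μ θ ^ 2 :=
        intervalIntegral.integral_nonneg (by linarith) fun θ _ => by positivity
      linarith
  rw [intervalIntegral.integral_sub (hGi _ _) (Continuous.intervalIntegrable (by fun_prop) _ _)]
    at b3
  rw [Real.norm_eq_abs] at b1 b2 b3
  have t1 : 2 / (c * phi μ a) * h ≤ max (2 / c) (4 / c ^ 2 * C) * (h / phi μ a) := by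
    have : 2 / (c * phi μ a) * h = 2 / c * (h / phi μ a) := by field_simp
    rw [this]
    gcongr
    exact le_max_left _ _
  have t2 : 8 * phi μ h / c ^ 2 * (C * (a / phi μ a ^ 2)) ≤
      2 * (max (2 / c) (4 / c ^ 2 * C) * (phi μ h * (a / phi μ a ^ 2))) := by
    have : 8 * phi μ h / c ^ 2 * (C * (a / phi μ a ^ 2)) =
      2 * ((4 / c ^ 2 * C) * (phi μ h * (a / phi μ a ^ 2))) := by ring
    rw [this]
    gcongr
    exact le_max_right _ _
  rw [abs_le] at *
  rw [mul_add]
  constructor <;> linarith [b1.1, b1.2, b2.1, b2.2, b3.1, b3.2]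

/-! ### Local regularity of the renewal mass function -/

/-- For a cutoff `A / n`, the difference of two nearby discounted masses is the sum of a low
frequency part, small because `cos(nθ)` and `cos((n-m)θ)` are close there, and of two high
frequency parts. -/
lemma abs_renMass_sub_mul_ell_le {μ : Measure ℝ} [IsProbabilityMeasure μ]
    (hX : ∀ᵐ x : ℝ ∂μ, ∃ n : ℕ, x = n) (h0 : 0 < tailF μ 0) {K : ℝ} (hK : 0 < K) {r : ℝ}
    (hr : 0 ≤ r) (hr1 : r < 1)
    (hhigh : ∀ n : ℕ, 0 < n → ∀ a : ℝ, 0 < a → a + Real.pi / n ≤ Real.pi →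
      |∫ θ in a..Real.pi, greenRe μ r θ * Real.cos (n * θ)| ≤
        K * (Real.pi / n / phi μ a + phi μ (Real.pi / n) * (a / phi μ a ^ 2)))
    {A D n m : ℕ} (hA : 0 < A) (hD : 2 ≤ D) (hm : m ≤ n / D) (hn : A + 8 ≤ n) (hn2 : 2 * A ≤ n)
    (he1 : 1 / 2 * ell μ n ≤ ell μ (n / A)) (he2 : 1 / 2 * ell μ n ≤ ell μ (n / (2 * A))) :
    |renMass μ r n - renMass μ r (n - m)| * ell μ n ≤ 96 * K / A + 128 * A / D := by
  have hpi := Real.pi_gt_three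
  have hpi4 := Real.pi_le_four
  have hAr : (0 : ℝ) < A := by exact_mod_cast hA
  have hDr : (0 : ℝ) < D := by exact_mod_cast (show 0 < D by omega)
  have hn0 : 0 < n := by omega
  have hnr : (0 : ℝ) < n := by exact_mod_cast hn0
  have hell : 0 < ell μ n := ell_pos hX h0 hnr
  have hg := continuous_greenRe μ hr hr1
  have hgi : ∀ (k : ℕ) x y, IntervalIntegrable (fun θ => greenRe μ r θ * Real.cos (k * θ))
      volume x y := fun k x y => Continuous.intervalIntegrable (by fun_prop) _ _
  have hmD : m * D ≤ n := (Nat.le_div_iff_mul_le (by omega)).1 hm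
  have hm2 : 2 * m ≤ n := by nlinarith
  set a : ℝ := A / n with ha
  have hapos : 0 < a := by positivity
  have hphia : A / n * (1 / 2 * ell μ n) ≤ phi μ a := by
    rw [phi, ha, one_div_div]; gcongr
  have hphia0 : 0 < A / n * (1 / 2 * ell μ n) := by positivity
  have hhigh' : ∀ k : ℕ, n ≤ 2 * k → k ≤ n →
      |∫ θ in a..Real.pi, greenRe μ r θ * Real.cos (k * θ)| ≤ 48 * K / (A * ell μ n) := by
    intro k hk1 hk2
    have hk0 : 0 < k := by omega
    have hkr : (0 : ℝ) < k := by exact_mod_cast hk0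
    have hk1r : (n : ℝ) ≤ 2 * k := by exact_mod_cast hk1
    have hk2r : (k : ℝ) ≤ n := by exact_mod_cast hk2
    have hh : Real.pi / k ≤ 8 / n := by
      rw [div_le_div_iff₀ hkr hnr]; nlinarith
    have hh0 : 0 < Real.pi / k := by positivity
    have hsum : a + Real.pi / k ≤ Real.pi := by
      have : a + 8 / n ≤ 1 := by
        rw [ha, ← add_div, div_le_one hnr]; exact_mod_cast hn
      linarith
    refine (hhigh k hk0 a hapos hsum).trans ?_
    have hphih : phi μ (Real.pi / k) ≤ 8 / n * ell μ n := by
      rw [phi]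
      refine mul_le_mul hh (ell_mono μ ?_) (ell_nonneg μ (by positivity)) (by positivity)
      rw [one_div_div, div_le_iff₀ (by positivity)]
      nlinarith
    have hphih0 := phi_pos hX h0 hh0
    calc K * (Real.pi / k / phi μ a + phi μ (Real.pi / k) * (a / phi μ a ^ 2))
        ≤ K * (8 / n / (A / n * (1 / 2 * ell μ n)) +
            8 / n * ell μ n * (a / (A / n * (1 / 2 * ell μ n)) ^ 2)) := by gcongr
      _ = 48 * K / (A * ell μ n) := by rw [ha]; field_simp; ring
  have hlow : |(∫ θ in (0 : ℝ)..a, greenRe μ r θ * Real.cos (n * θ)) -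
      ∫ θ in (0 : ℝ)..a, greenRe μ r θ * Real.cos ((n - m : ℕ) * θ)| ≤
      128 * A / (D * ell μ n) := by
    rw [← intervalIntegral.integral_sub (hgi _ _ _) (hgi _ _ _), ← Real.norm_eq_abs]
    have hstep := intervalIntegral.norm_integral_le_of_norm_le (μ := volume) hapos.le
      (f := fun θ => greenRe μ r θ * Real.cos (n * θ) -
        greenRe μ r θ * Real.cos ((n - m : ℕ) * θ))
      (g := fun θ => (A / D : ℝ) * greenRe μ r θ) (ae_of_all _ fun θ hθ => ?_)
      (Continuous.intervalIntegrable (by fun_prop) _ _)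
    · refine hstep.trans ?_
      rw [intervalIntegral.integral_const_mul]
      have hN0 : 0 < n / A := Nat.div_pos (by omega) hA
      have hNr : (0 : ℝ) < (n / A : ℕ) := by exact_mod_cast hN0
      have hNlow : (n : ℝ) / (2 * A) ≤ (n / A : ℕ) := by
        rw [div_le_iff₀ (by positivity)]
        have h1 : n < A * (n / A + 1) := Nat.lt_mul_div_succ n hA
        have h2 : n ≤ (n / A) * (2 * A) := by nlinarith
        exact_mod_cast h2
      have haN : a ≤ 1 / (n / A : ℕ) := by
        rw [ha, div_le_div_iff₀ hnr hNr, one_mul]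
        exact_mod_cast Nat.mul_div_le n A
      have hI : ∫ θ in (0 : ℝ)..a, greenRe μ r θ ≤ 128 / ell μ n := by
        have h1 : ∫ θ in (0 : ℝ)..a, greenRe μ r θ ≤
            ∫ θ in (0 : ℝ)..(1 / (n / A : ℕ)), greenRe μ r θ := by
          rw [← intervalIntegral.integral_add_adjacent_intervals (hg.intervalIntegrable 0 a)
            (hg.intervalIntegrable a (1 / (n / A : ℕ)))]
          have : 0 ≤ ∫ θ in a..(1 / (n / A : ℕ)), greenRe μ r θ :=
            intervalIntegral.integral_nonneg haN fun θ _ => greenRe_nonneg μ hr hr1 θ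
          linarith
        refine h1.trans ((integral_greenRe_low_le hX h0 hr hr1 hN0).trans ?_)
        have h2 : 1 / 2 * ell μ n ≤ ell μ (n / A : ℕ) := he2.trans (ell_mono μ hNlow)
        rw [div_le_div_iff₀ (by linarith) hell]
        nlinarith
      calc (A / D : ℝ) * ∫ θ in (0 : ℝ)..a, greenRe μ r θ ≤ A / D * (128 / ell μ n) := by gcongr
        _ = _ := by field_simp
    · rw [← mul_sub, norm_mul, Real.norm_eq_abs, abs_of_nonneg (greenRe_nonneg μ hr hr1 θ),
        mul_comm]
      refine mul_le_mul_of_nonneg_right ?_ (greenRe_nonneg μ hr hr1 θ)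
      refine (Real.abs_cos_sub_cos_le _ _).trans ?_
      rw [Nat.cast_sub (by omega), ← sub_mul, sub_sub_cancel, abs_of_nonneg
        (mul_nonneg (by positivity) hθ.1.le)]
      calc (m : ℝ) * θ ≤ m * (A / n) := by gcongr; exact hθ.2
        _ = (m * D) * (A / (n * D)) := by field_simp
        _ ≤ n * (A / (n * D)) := by
            gcongr
            exact_mod_cast hmD
        _ = _ := by field_simp
  have f1 := integral_greenRe_mul_cos hX hr hr1 n
  have f2 := integral_greenRe_mul_cos hX hr hr1 (n - m)
  rw [← intervalIntegral.integral_add_adjacent_intervals (hgi _ 0 a) (hgi _ a Real.pi),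
    cosWeight, if_neg (by omega)] at f1 f2
  have g1 := hhigh' n (by omega) le_rfl
  have g2 := hhigh' (n - m) (by omega) (by omega)
  have hfin : Real.pi / 2 * |renMass μ r n - renMass μ r (n - m)| ≤
      128 * A / (D * ell μ n) + 2 * (48 * K / (A * ell μ n)) := by
    rw [← abs_of_pos (show 0 < Real.pi / 2 by linarith), ← abs_mul, mul_sub, ← f1, ← f2]
    rw [abs_le] at *
    constructor <;> linarith [g1.1, g1.2, g2.1, g2.2, hlow.1, hlow.2]
  have hfin2 : |renMass μ r n - renMass μ r (n - m)| ≤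
      128 * A / (D * ell μ n) + 2 * (48 * K / (A * ell μ n)) := by
    nlinarith [abs_nonneg (renMass μ r n - renMass μ r (n - m))]
  calc _ ≤ (128 * A / (D * ell μ n) + 2 * (48 * K / (A * ell μ n))) * ell μ n := by gcongr
    _ = _ := by field_simp; ring

/-- The masses at `n` and at `n - m` differ by `o(1 / ℓ(n))`, uniformly in `m ≤ n / D`, once `D`
is large. -/
lemma exists_local_regularity {μ : Measure ℝ} [IsProbabilityMeasure μ]
    (hX : ∀ᵐ x : ℝ ∂μ, ∃ n : ℕ, x = n)
    (hspan : ¬ ∃ d : ℕ, 2 ≤ d ∧ μ {x : ℝ | ∃ k : ℕ, x = (d * k : ℕ)} = 1)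
    (hsv : SlowlyVarying (ell μ)) {η : ℝ} (hη : 0 < η) :
    ∃ D : ℕ, 2 ≤ D ∧ ∀ᶠ n : ℕ in atTop, ∀ m ≤ n / D,
      |renMass μ 1 n - renMass μ 1 (n - m)| * ell μ n ≤ η := by
  have h0 := tailF_zero_pos hX hspan
  obtain ⟨K, hK, hhigh⟩ := exists_integral_high_le hX hspan hsv
  obtain ⟨A, hA⟩ := exists_nat_gt (max 2 (192 * K / η))
  have hA2 : (2 : ℝ) < A := (le_max_left _ _).trans_lt hA
  have hAK : 192 * K / η < A := (le_max_right _ _).trans_lt hA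
  obtain ⟨D, hD⟩ := exists_nat_gt (max 2 (256 * A / η))
  have hD2 : (2 : ℝ) < D := (le_max_left _ _).trans_lt hD
  have hDA : 256 * A / η < D := (le_max_right _ _).trans_lt hD
  have hA0 : 0 < A := by exact_mod_cast (show (0 : ℝ) < A by linarith)
  have hDn : 2 ≤ D := by exact_mod_cast hD2.le
  refine ⟨D, hDn, ?_⟩
  have e1 := tendsto_natCast_atTop_atTop.eventually
    (eventually_ell_div hsv (show (1 : ℝ) < A by linarith) (show (1 / 2 : ℝ) < 1 by norm_num))
  have e2 := tendsto_natCast_atTop_atTop.eventually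
    (eventually_ell_div hsv (show (1 : ℝ) < 2 * A by linarith) (show (1 / 2 : ℝ) < 1 by norm_num))
  filter_upwards [e1, e2, eventually_ge_atTop (A + 8), eventually_ge_atTop (2 * A)]
    with n he1 he2 hn hn2 m hm
  have hlim : Tendsto (fun r => |renMass μ r n - renMass μ r (n - m)| * ell μ n) (𝓝[<] 1)
      (𝓝 (|renMass μ 1 n - renMass μ 1 (n - m)| * ell μ n)) :=
    (((tendsto_renMass hX h0 n).sub (tendsto_renMass hX h0 (n - m))).abs).mul_const _
  refine le_of_tendsto hlim ?_
  have h1 : ∀ᶠ r : ℝ in 𝓝[<] 1, 0 < r := nhdsWithin_le_nhds (lt_mem_nhds one_pos)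
  filter_upwards [h1, self_mem_nhdsWithin] with r hr hr1
  refine (abs_renMass_sub_mul_ell_le hX h0 hK hr.le hr1 (hhigh r hr.le hr1) hA0 hDn hm hn hn2
    he1 he2).trans ?_
  have k1 : 96 * K / A ≤ η / 2 := by
    rw [div_lt_iff₀ hη] at hAK
    rw [div_le_iff₀ (by linarith)]; nlinarith
  have k2 : 128 * A / D ≤ η / 2 := by
    rw [div_lt_iff₀ hη] at hDA
    rw [div_le_iff₀ (by linarith)]; nlinarith
  linarith

/-! ### Passage to the limit in the renewal equation -/

/-- By local regularity the renewal equation at `n` reads `u(n) ℓ(n / D) ≈ 1`. -/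
lemma exists_abs_renMass_mul_ell_sub_one_le {μ : Measure ℝ} [IsProbabilityMeasure μ]
    (hX : ∀ᵐ x : ℝ ∂μ, ∃ n : ℕ, x = n)
    (hspan : ¬ ∃ d : ℕ, 2 ≤ d ∧ μ {x : ℝ | ∃ k : ℕ, x = (d * k : ℕ)} = 1)
    (hsv : SlowlyVarying (ell μ)) {η : ℝ} (hη : 0 < η) :
    ∃ D : ℕ, 2 ≤ D ∧ ∀ᶠ n : ℕ in atTop,
      |renMass μ 1 n * ell μ (n / D : ℕ) - 1| ≤ 2 * η := by
  have h0 := tailF_zero_pos hX hspan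
  obtain ⟨D, hD, hloc⟩ := exists_local_regularity hX hspan hsv hη
  have hD0 : 0 < D := by omega
  have hDr : (0 : ℝ) < D := by exact_mod_cast hD0
  refine ⟨D, hD, ?_⟩
  have hdiv : Tendsto (fun n : ℕ => n / D) atTop atTop := Nat.tendsto_div_const_atTop hD0.ne'
  have htail := (tendsto_natCast_atTop_atTop (R := ℝ)).comp hdiv |>.eventually
    ((tendsto_mul_tailF_div_ell hsv).eventually
      (gt_mem_nhds (show (0 : ℝ) < η / (4 * D) by positivity)))
  filter_upwards [hloc, htail, eventually_ge_atTop D] with n hn ht hnD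
  simp only [Function.comp_apply] at ht
  set M := n / D with hM
  have hM0 : 0 < M := Nat.div_pos hnD hD0
  have hMn : M ≤ n := Nat.div_le_self _ _
  have hMr : (0 : ℝ) < M := by exact_mod_cast hM0
  have hellM : 0 < ell μ M := ell_pos hX h0 hMr
  have hnr : (0 : ℝ) < n := by exact_mod_cast hD0.trans_le hnD
  have helln : 0 < ell μ n := ell_pos hX h0 hnr
  have hMn' : ell μ M ≤ ell μ n := ell_mono μ (by exact_mod_cast hMn)
  have hren := sum_renMass_mul_tailF hX h0 n
  rw [← Finset.sum_flip] at hren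
  have hren2 : ∑ k ∈ Finset.range (n + 1), renMass μ 1 (n - k) * tailF μ k = 1 := by
    refine Eq.trans (Finset.sum_congr rfl fun k hk => ?_) hren
    rw [Nat.sub_sub_self (by simp at hk; omega)]
  rw [← Finset.sum_range_add_sum_Ico _ (show M ≤ n + 1 by omega)] at hren2
  have hR0 : 0 ≤ ∑ k ∈ Finset.Ico M (n + 1), renMass μ 1 (n - k) * tailF μ k :=
    Finset.sum_nonneg fun k _ => mul_nonneg (renMass_nonneg μ zero_le_one _) (tailF_nonneg μ _)
  have hR : ∑ k ∈ Finset.Ico M (n + 1), renMass μ 1 (n - k) * tailF μ k ≤ η := by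
    have h1 : ∑ k ∈ Finset.Ico M (n + 1), renMass μ 1 (n - k) * tailF μ k ≤
        (∑ i ∈ Finset.range (n + 1), renMass μ 1 i) * tailF μ M := by
      calc _ ≤ ∑ k ∈ Finset.Ico M (n + 1), renMass μ 1 (n - k) * tailF μ M := by
            refine Finset.sum_le_sum fun k hk => ?_
            refine mul_le_mul_of_nonneg_left (tailF_antitone μ ?_) (renMass_nonneg μ zero_le_one _)
            exact_mod_cast (Finset.mem_Ico.1 hk).1
        _ ≤ _ := by
            rw [← Finset.sum_mul]
            refine mul_le_mul_of_nonneg_right ?_ (tailF_nonneg μ _)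
            refine sum_comp_le (v := renMass μ 1) (fun k => renMass_nonneg μ zero_le_one k)
              (e := fun k => n - k) ?_ ?_
            · intro x hx y hy h
              simp at hx hy h
              omega
            · intro x _
              omega
    have h2 := sum_renMass_mul_ell_le hX h0 (n + 1)
    have h3 : ell μ M ≤ ell μ ((n + 1 : ℕ) : ℝ) := ell_mono μ (by exact_mod_cast (by omega))
    have h4 : ((n + 1 : ℕ) : ℝ) ≤ 2 * D * M := by
      have h5 : n < D * (M + 1) := Nat.lt_mul_div_succ n hD0
      have h6 : n + 1 ≤ 2 * D * M := by nlinarith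
      exact_mod_cast h6
    set U := ∑ i ∈ Finset.range (n + 1), renMass μ 1 i
    have hU : 0 ≤ U := Finset.sum_nonneg fun i _ => renMass_nonneg μ zero_le_one i
    have h7 : U * ell μ M ≤ 4 * D * M := by nlinarith
    rw [div_lt_div_iff₀ hellM (by positivity)] at ht
    have h8 : U * tailF μ M * ell μ M ≤ η * ell μ M := by
      calc U * tailF μ M * ell μ M = (U * ell μ M) * tailF μ M := by ring
        _ ≤ (4 * D * M) * tailF μ M := mul_le_mul_of_nonneg_right h7 (tailF_nonneg μ _)
        _ = M * tailF μ M * (4 * D) := by ring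
        _ ≤ η * ell μ M := ht.le
    exact h1.trans (le_of_mul_le_mul_right h8 hellM)
  have hmain : |renMass μ 1 n * ell μ M -
      ∑ k ∈ Finset.range M, renMass μ 1 (n - k) * tailF μ k| ≤ η := by
    rw [ell_nat hX M, Finset.mul_sum, ← Finset.sum_sub_distrib]
    calc _ ≤ ∑ k ∈ Finset.range M, η / ell μ n * tailF μ k := by
          refine (Finset.abs_sum_le_sum_abs _ _).trans (Finset.sum_le_sum fun k hk => ?_)
          rw [← sub_mul, abs_mul, abs_of_nonneg (tailF_nonneg μ _)]
          refine mul_le_mul_of_nonneg_right ?_ (tailF_nonneg μ _)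
          rw [le_div_iff₀ helln]
          exact hn k (Finset.mem_range.1 hk).le
      _ = η / ell μ n * ell μ M := by rw [← Finset.mul_sum, ell_nat hX M]
      _ ≤ η / ell μ n * ell μ n := by gcongr
      _ = η := by field_simp
  rw [abs_le] at *
  constructor <;> linarith [hmain.1, hmain.2]

/-- Arithmetic renewal theorem: if `X` takes values in `ℕ` with span 1,
`E X = ∞`, and `ℓ` is slowly varying, then `ℓ(n) Σ_k P[S_k = n] → 1`. -/
theorem stmt7 (μ : Measure ℝ) [IsProbabilityMeasure μ]
    (hlat : μ {x : ℝ | ∃ n : ℕ, x = n} = 1)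
    (hspan : ¬ ∃ d : ℕ, 2 ≤ d ∧ μ {x : ℝ | ∃ k : ℕ, x = (d * k : ℕ)} = 1)
    (hmean : ∫⁻ x, ENNReal.ofReal |x| ∂μ = ⊤)
    (hsv : SlowlyVarying (ell μ)) :
    Tendsto (fun n : ℕ => ell μ n * (renewal μ {(n : ℝ)}).toReal)
      atTop (𝓝 1) := by
  have hX : ∀ᵐ x : ℝ ∂μ, ∃ n : ℕ, x = n := by
    refine (prob_compl_eq_zero_iff₀ ?_).2 hlat
    refine (Set.Countable.measurableSet ?_).nullMeasurableSet
    refine (countable_range (fun k : ℕ => (k : ℝ))).mono ?_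
    rintro x ⟨k, hk⟩; exact ⟨k, hk.symm⟩
  have h0 := tailF_zero_pos hX hspan
  simp_rw [toReal_renewal]
  rw [Metric.tendsto_atTop']
  intro ε hε
  set η := min ε 1 / 16 with hη
  have hη0 : 0 < η := by positivity
  have hη1 : η ≤ 1 / 16 := by rw [hη]; gcongr; exact min_le_right _ _
  have hηε : 16 * η ≤ ε := by rw [hη]; linarith [min_le_left ε 1]
  obtain ⟨D, hD, hev⟩ := exists_abs_renMass_mul_ell_sub_one_le hX hspan hsv hη0
  have hDr : (2 : ℝ) ≤ D := by exact_mod_cast hD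
  have hsv' := tendsto_natCast_atTop_atTop.eventually
    (eventually_ell_div hsv (show (1 : ℝ) < 2 * D by linarith)
      (show 1 - η < 1 by linarith))
  have hfin : ∀ᶠ n : ℕ in atTop, dist (ell μ n * renMass μ 1 n) 1 < ε := by
    filter_upwards [hev, hsv', eventually_ge_atTop D] with n h1 h2 hnD
    have hlow : (n : ℝ) / (2 * D) ≤ (n / D : ℕ) := by
      rw [div_le_iff₀ (by positivity)]
      have h4 : n < D * (n / D + 1) := Nat.lt_mul_div_succ n (by omega)
      have h6 : 0 < n / D := Nat.div_pos hnD (by omega)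
      have h5 : n ≤ (n / D) * (2 * D) := by nlinarith
      exact_mod_cast h5
    have h3 : (1 - η) * ell μ n ≤ ell μ (n / D : ℕ) := h2.trans (ell_mono μ hlow)
    have h4 : ell μ (n / D : ℕ) ≤ ell μ n := ell_mono μ (by exact_mod_cast Nat.div_le_self _ _)
    have hu := renMass_nonneg μ zero_le_one n
    set u := renMass μ 1 n
    set L := ell μ n
    set L' := ell μ (n / D : ℕ)
    have k1 : u * L' ≤ u * L := by gcongr
    have k2 : u * ((1 - η) * L) ≤ u * L' := by gcongr
    rw [abs_le] at h1
    rw [Real.dist_eq, abs_lt]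
    constructor <;> nlinarith [h1.1, h1.2]
  obtain ⟨N, hN⟩ := eventually_atTop.1 hfin
  exact ⟨N, fun n hn => hN n hn.le⟩
end

section
/- Let X be a real random variable with E|X| = ∞ satisfying condition (Ha): A(x)/(xH(x)) → ∞. Then the characteristic function φ satisfies 1 - φ(θ) = -iθ A(1/|θ|)(1 + o(1)) as θ → 0. -/
/-!
Write `x = 1/|θ|` and let `c(X)` be `X` clamped to `[-x, x]`, so that `A(x) = E[c(X)]`. Then
`1 - φ(θ) + iθ A(x) = E[1 - e^{iθX} + iθ c(X)]`. Where `|X| ≤ x` the integrand is a Taylor remainder,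
of size at most `θ² X²`; where `|X| > x` it is at most `3`. Hence
`|1 - φ(θ) + iθ A(x)| ≤ 2 θ² I(x) + 3 H(x)` with `I(x) = ∫₀ˣ t H(t) dt = E[min(|X|, x)²] / 2`.

Dividing by `|θ| A(x)`, it remains to see that `x H(x) = o(A(x))`, which is the hypothesis, and that
`I(x) = o(x A(x))`. For the latter, `t H(t) ≤ ε A(t)` for large `t`, while integration by parts and
`|K| ≤ H` give `∫₀ˣ A ≤ x A(x) + I(x)`; therefore `I(x) ≤ C + ε (x A(x) + I(x))`. Since `E|X| = ∞`
forces `I(x) → ∞`, both `C` and `ε I(x)` are absorbed by the left-hand side.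
-/

open MeasureTheory Filter Set Asymptotics Topology

/-- Two-sided tail `H(x) = P[|X| > x] = 1 - F(x) + F(-x-0)`. -/
noncomputable def Hf (μ : Measure ℝ) (x : ℝ) : ℝ := (μ {y : ℝ | x < |y|}).toReal

/-- `K(x) = P[X > x] - P[X < -x] = 1 - F(x) - F(-x-0)`. -/
noncomputable def Kf (μ : Measure ℝ) (x : ℝ) : ℝ :=
  (μ (Set.Ioi x)).toReal - (μ (Set.Iio (-x))).toReal

/-- `A(x) = ∫₀ˣ K(t) dt`. -/
noncomputable def Af (μ : Measure ℝ) (x : ℝ) : ℝ := ∫ t in (0:ℝ)..x, Kf μ t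

/-- `ℓ(x) = ∫₀ˣ H(t) dt`. -/
noncomputable def ellH (μ : Measure ℝ) (x : ℝ) : ℝ := ∫ t in (0:ℝ)..x, Hf μ t

/-- `m(x)`, defined by `1/m(x) = ∫ₓ^∞ H(t)/A²(t) dt`. -/
noncomputable def mF (μ : Measure ℝ) (x : ℝ) : ℝ :=
  (∫ t in Set.Ioi x, Hf μ t / (Af μ t) ^ 2)⁻¹

/-- `r₊(x) = ∫ₓ^∞ (1-F(t))/A²(t) dt`. -/
noncomputable def rPlus (μ : Measure ℝ) (x : ℝ) : ℝ :=
  ∫ t in Set.Ioi x, tailF μ t / (Af μ t) ^ 2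

/-- `r₋(x) = ∫ₓ^∞ F(-t)/A²(t) dt`. -/
noncomputable def rMinus (μ : Measure ℝ) (x : ℝ) : ℝ :=
  ∫ t in Set.Ioi x, (μ (Set.Iio (-t))).toReal / (Af μ t) ^ 2

/-- Condition (Ha): `A(x)/(x H(x)) → ∞`, i.e. positive relative stability. -/
def HaCond (μ : Measure ℝ) : Prop :=
  Tendsto (fun x => Af μ x / (x * Hf μ x)) atTop atTop

/-- Condition (Hb): `∫_{x₀}^∞ H(x)/A²(x) dx < ∞` for some `x₀ > 0`
with `A` positive on `[x₀, ∞)`. -/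
def HbCond (μ : Measure ℝ) : Prop :=
  ∃ x₀ : ℝ, 0 < x₀ ∧ (∀ x ≥ x₀, 0 < Af μ x) ∧
    IntegrableOn (fun x => Hf μ x / (Af μ x) ^ 2) (Set.Ioi x₀)

/-- `X` is arithmetic: `X/h ∈ ℤ` almost surely for some `h > 0`. -/
def IsArith (μ : Measure ℝ) : Prop :=
  ∃ h : ℝ, 0 < h ∧ μ {x : ℝ | ∃ n : ℤ, x = n * h} = 1

/-- Characteristic function `φ(θ) = E[e^{iθX}]`. -/
noncomputable def charF (μ : Measure ℝ) (θ : ℝ) : ℂ :=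
  ∫ x, Complex.exp (Complex.I * θ * x) ∂μ

/-! ### Tail functions -/

lemma antitone_tail_pos (μ : Measure ℝ) [IsProbabilityMeasure μ] :
    Antitone fun t => (μ (Set.Ioi t)).toReal := fun _ _ h =>
  ENNReal.toReal_mono (measure_ne_top _ _) (measure_mono (Ioi_subset_Ioi h))

lemma antitone_tail_neg (μ : Measure ℝ) [IsProbabilityMeasure μ] :
    Antitone fun t => (μ (Set.Iio (-t))).toReal := fun _ _ h =>
  ENNReal.toReal_mono (measure_ne_top _ _) (measure_mono (Iio_subset_Iio (neg_le_neg h)))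

lemma antitone_Hf (μ : Measure ℝ) [IsProbabilityMeasure μ] : Antitone (Hf μ) := fun _ _ h =>
  ENNReal.toReal_mono (measure_ne_top _ _) (measure_mono fun _ hy => lt_of_le_of_lt h hy)

lemma intervalIntegrable_Kf (μ : Measure ℝ) [IsProbabilityMeasure μ] (a b : ℝ) :
    IntervalIntegrable (Kf μ) volume a b :=
  (antitone_tail_pos μ).intervalIntegrable.sub (antitone_tail_neg μ).intervalIntegrable

lemma intervalIntegrable_mul_Hf (μ : Measure ℝ) [IsProbabilityMeasure μ] (a b : ℝ) :
    IntervalIntegrable (fun t => t * Hf μ t) volume a b :=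
  (antitone_Hf μ).intervalIntegrable.continuousOn_mul continuousOn_id

lemma intervalIntegrable_mul_Kf (μ : Measure ℝ) [IsProbabilityMeasure μ] (a b : ℝ) :
    IntervalIntegrable (fun t => t * Kf μ t) volume a b :=
  (intervalIntegrable_Kf μ a b).continuousOn_mul continuousOn_id

lemma Hf_nonneg (μ : Measure ℝ) (t : ℝ) : 0 ≤ Hf μ t := ENNReal.toReal_nonneg

lemma abs_Kf_le (μ : Measure ℝ) [IsProbabilityMeasure μ] (t : ℝ) :
    |Kf μ t| ≤ Hf μ t := by
  have h1 : (μ (Set.Ioi t)).toReal ≤ Hf μ t :=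
    ENNReal.toReal_mono (measure_ne_top _ _)
      (measure_mono fun y hy => lt_of_lt_of_le hy (le_abs_self y))
  have h2 : (μ (Set.Iio (-t))).toReal ≤ Hf μ t :=
    ENNReal.toReal_mono (measure_ne_top _ _) (measure_mono fun y hy => by
      have hy' : y < -t := hy
      exact lt_of_lt_of_le (by linarith) (neg_le_abs y))
  have h3 : 0 ≤ (μ (Set.Ioi t)).toReal := ENNReal.toReal_nonneg
  have h4 : 0 ≤ (μ (Set.Iio (-t))).toReal := ENNReal.toReal_nonneg
  rw [Kf, abs_le]
  constructor <;> linarith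

lemma continuous_Af (μ : Measure ℝ) [IsProbabilityMeasure μ] : Continuous (Af μ) :=
  intervalIntegral.continuous_primitive (fun a b => intervalIntegrable_Kf μ a b) 0

/-! ### Integration by parts for `A` -/

/-- Integration by parts for `t ↦ t A(t)`, which is differentiable with derivative
`A(t) + t K(t)` off the countable set of discontinuities of `K`. -/
lemma mul_Af_eq (μ : Measure ℝ) [IsProbabilityMeasure μ] (x : ℝ) :
    x * Af μ x = (∫ t in (0:ℝ)..x, Af μ t) + ∫ t in (0:ℝ)..x, t * Kf μ t := by
  have hc := (antitone_tail_pos μ).countable_not_continuousAt.union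
    (antitone_tail_neg μ).countable_not_continuousAt
  have hI : IntervalIntegrable (Af μ) volume 0 x := (continuous_Af μ).intervalIntegrable _ _
  have key := integral_eq_of_hasDerivAt_off_countable (fun t => t * Af μ t)
    (fun t => Af μ t + t * Kf μ t) (a := 0) (b := x) hc
    (continuous_id.mul (continuous_Af μ)).continuousOn
    (fun t ht => by
      have hmem := ht.2
      simp only [mem_union, mem_ofPred_eq, not_or, not_not] at hmem
      have hK : ContinuousAt (Kf μ) t := hmem.1.sub hmem.2
      have hmeas : StronglyMeasurable (Kf μ) :=
        ((antitone_tail_pos μ).measurable.sub (antitone_tail_neg μ).measurable).stronglyMeasurable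
      have hd : HasDerivAt (Af μ) (Kf μ t) t :=
        intervalIntegral.integral_hasDerivAt_right (intervalIntegrable_Kf μ 0 t)
          hmeas.stronglyMeasurableAtFilter hK
      have hprod := (hasDerivAt_id' t).fun_mul hd
      rw [one_mul] at hprod
      exact hprod)
    (hI.add (intervalIntegrable_mul_Kf μ 0 x))
  rw [intervalIntegral.integral_add hI (intervalIntegrable_mul_Kf μ 0 x)] at key
  simpa using key.symm

lemma integral_Af_le (μ : Measure ℝ) [IsProbabilityMeasure μ] {x : ℝ} (hx : 0 ≤ x) :
    ∫ t in (0:ℝ)..x, Af μ t ≤ x * Af μ x + ∫ t in (0:ℝ)..x, t * Hf μ t := by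
  have h : ∫ t in (0:ℝ)..x, -(t * Hf μ t) ≤ ∫ t in (0:ℝ)..x, t * Kf μ t := by
    refine intervalIntegral.integral_mono_on hx (intervalIntegrable_mul_Hf μ 0 x).neg
      (intervalIntegrable_mul_Kf μ 0 x) fun t ht => ?_
    have := (abs_le.1 (abs_Kf_le μ t)).1
    nlinarith [ht.1]
  rw [intervalIntegral.integral_neg] at h
  linarith [mul_Af_eq μ x]

/-! ### Truncated moments -/

/-- Layer-cake formula for a nonnegative variable `f` truncated at the level `x`. -/
lemma layercake_min (μ : Measure ℝ) [IsProbabilityMeasure μ] {f g : ℝ → ℝ} (hf : Measurable f)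
    (hf0 : ∀ y, 0 ≤ f y) (hg : Continuous g) (hg0 : ∀ t, 0 ≤ t → 0 ≤ g t) {x : ℝ} (hx : 0 ≤ x) :
    ∫ y, (∫ t in (0:ℝ)..min (f y) x, g t) ∂μ
      = ∫ t in (0:ℝ)..x, (μ {y | t < f y}).toReal * g t := by
  have hG : Continuous fun u : ℝ => ∫ t in (0:ℝ)..u, g t :=
    intervalIntegral.continuous_primitive (fun a b => hg.intervalIntegrable a b) 0
  have hanti : Antitone fun t => (μ {y | t < f y}).toReal := fun _ _ h =>
    ENNReal.toReal_mono (measure_ne_top _ _) (measure_mono fun _ hy => lt_of_le_of_lt h hy)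
  have key := lintegral_comp_eq_lintegral_meas_lt_mul μ (f := fun y => min (f y) x) (g := g)
    (ae_of_all _ fun y => le_min (hf0 y) hx) (hf.min measurable_const).aemeasurable
    (fun t _ => hg.intervalIntegrable 0 t)
    ((ae_restrict_iff' measurableSet_Ioi).2 (ae_of_all _ fun t ht => hg0 t (le_of_lt ht)))
  rw [integral_eq_lintegral_of_nonneg_ae
      (ae_of_all _ fun y => intervalIntegral.integral_nonneg (le_min (hf0 y) hx)
        fun t ht => hg0 t ht.1)
      (hG.measurable.comp (hf.min measurable_const)).aestronglyMeasurable, key,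
    intervalIntegral.integral_of_le hx, integral_eq_lintegral_of_nonneg_ae
      ((ae_restrict_iff' measurableSet_Ioc).2 (ae_of_all _ fun t ht =>
        mul_nonneg ENNReal.toReal_nonneg (hg0 t ht.1.le)))
      (hanti.measurable.mul hg.measurable).aestronglyMeasurable]
  congr 1
  -- the integrand on the left vanishes beyond `x`
  rw [← lintegral_indicator measurableSet_Ioi, ← lintegral_indicator measurableSet_Ioc]
  have hne : ∀ᵐ t : ℝ, t ≠ x := by simp [ae_iff]
  refine lintegral_congr_ae ?_
  filter_upwards [hne] with t htx
  by_cases h0 : 0 < t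
  · by_cases h1 : t < x
    · rw [indicator_of_mem (mem_Ioi.2 h0), indicator_of_mem (mem_Ioc.2 ⟨h0, h1.le⟩),
        ENNReal.ofReal_mul ENNReal.toReal_nonneg, ENNReal.ofReal_toReal (measure_ne_top _ _)]
      simp [h1]
    · have h2 : ¬ t ≤ x := fun h => h1 (lt_of_le_of_ne h htx)
      rw [indicator_of_mem (mem_Ioi.2 h0), indicator_of_notMem (s := Ioc 0 x) (fun h => h2 h.2)]
      simp [h1]
  · rw [indicator_of_notMem (s := Ioi 0) (fun h => h0 h),
      indicator_of_notMem (s := Ioc 0 x) (fun h => h0 h.1)]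

/-- The truncated second moment is `E[min(|X|, x)²] = 2 ∫₀ˣ t H(t) dt`. -/
lemma integral_min_sq (μ : Measure ℝ) [IsProbabilityMeasure μ] {x : ℝ} (hx : 0 ≤ x) :
    ∫ y, (min |y| x) ^ 2 ∂μ = 2 * ∫ t in (0:ℝ)..x, t * Hf μ t := by
  have h := layercake_min μ (f := fun y => |y|) (g := fun t => 2 * t) measurable_norm
    (fun y => abs_nonneg y) (by fun_prop) (fun t ht => mul_nonneg zero_le_two ht) hx
  have e : ∀ u : ℝ, ∫ t in (0:ℝ)..u, 2 * t = u ^ 2 := fun u => by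
    rw [intervalIntegral.integral_const_mul, integral_id]; ring
  simp only [e] at h
  rw [h, ← intervalIntegral.integral_const_mul]
  refine intervalIntegral.integral_congr fun t _ => ?_
  simp only [Hf]; ring

/-- `A(x)` is the mean of `X` clamped to `[-x, x]`. -/
lemma Af_eq (μ : Measure ℝ) [IsProbabilityMeasure μ] {x : ℝ} (hx : 0 ≤ x) :
    Af μ x = ∫ y, max (min y x) (-x) ∂μ := by
  have h1 := layercake_min μ (f := fun y => max y 0) (g := fun _ => 1)
    (measurable_id.max measurable_const)
    (fun y => le_max_right _ _) (by fun_prop) (fun _ _ => zero_le_one) hx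
  have h2 := layercake_min μ (f := fun y => max (-y) 0) (g := fun _ => 1)
    (measurable_id.neg.max measurable_const)
    (fun y => le_max_right _ _) (by fun_prop) (fun _ _ => zero_le_one) hx
  simp only [intervalIntegral.integral_const, sub_zero, smul_eq_mul, mul_one] at h1 h2
  have i1 : Integrable (fun y => min (max y 0) x) μ :=
    Integrable.of_bound (C := x) (by fun_prop) (ae_of_all _ fun y => by
      rw [Real.norm_of_nonneg (le_min (le_max_right _ _) hx)]; exact min_le_right _ _)
  have i2 : Integrable (fun y => min (max (-y) 0) x) μ :=
    Integrable.of_bound (C := x) (by fun_prop) (ae_of_all _ fun y => by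
      rw [Real.norm_of_nonneg (le_min (le_max_right _ _) hx)]; exact min_le_right _ _)
  have e : ∀ y : ℝ, max (min y x) (-x) = min (max y 0) x - min (max (-y) 0) x := fun y => by
    grind
  simp only [e]
  rw [integral_sub i1 i2, h1, h2, ← intervalIntegral.integral_sub]
  · refine intervalIntegral.integral_congr fun t ht => ?_
    rw [uIcc_of_le hx] at ht
    have s1 : {y : ℝ | t < max y 0} = Ioi t := by
      ext y; simp [not_lt.2 ht.1]
    have s2 : {y : ℝ | t < max (-y) 0} = Iio (-t) := by
      ext y; simp [not_lt.2 ht.1, lt_neg]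
    simp only [s1, s2, Kf]
  · refine Antitone.intervalIntegrable fun _ _ h => ?_
    exact ENNReal.toReal_mono (measure_ne_top _ _) (measure_mono fun _ hy => lt_of_le_of_lt h hy)
  · refine Antitone.intervalIntegrable fun _ _ h => ?_
    exact ENNReal.toReal_mono (measure_ne_top _ _) (measure_mono fun _ hy => lt_of_le_of_lt h hy)

lemma integral_mul_Hf_mono (μ : Measure ℝ) [IsProbabilityMeasure μ] {a b : ℝ}
    (ha : 0 ≤ a) (hab : a ≤ b) :
    ∫ t in (0:ℝ)..a, t * Hf μ t ≤ ∫ t in (0:ℝ)..b, t * Hf μ t := by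
  rw [← intervalIntegral.integral_add_adjacent_intervals
    (intervalIntegrable_mul_Hf μ 0 a) (intervalIntegrable_mul_Hf μ a b)]
  have := intervalIntegral.integral_nonneg (μ := volume) hab (f := fun t => t * Hf μ t)
    fun t ht => mul_nonneg (ha.trans ht.1) (Hf_nonneg μ t)
  linarith

/-- If `E|X| = ∞`, the truncated second moments are unbounded: otherwise
`min(|X|, n) ≤ min(|X|, n)² + 1` and monotone convergence would bound `E|X|`. -/
lemma tendsto_integral_mul_Hf (μ : Measure ℝ) [IsProbabilityMeasure μ]
    (hmean : ∫⁻ x, ENNReal.ofReal |x| ∂μ = ⊤) :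
    Tendsto (fun x => ∫ t in (0:ℝ)..x, t * Hf μ t) atTop atTop := by
  have hlim : Tendsto (fun n : ℕ => ∫⁻ y, ENNReal.ofReal (min |y| n) ∂μ) atTop (𝓝 ⊤) := by
    rw [← hmean]
    refine lintegral_tendsto_of_tendsto_of_monotone (fun n => by fun_prop)
      (ae_of_all _ fun y m n hmn => ENNReal.ofReal_le_ofReal
        (min_le_min_left _ (Nat.cast_le.2 hmn)))
      (ae_of_all _ fun y => tendsto_const_nhds.congr' ?_)
    filter_upwards [eventually_ge_atTop ⌈|y|⌉₊] with n hn
    rw [min_eq_left (Nat.ceil_le.1 hn)]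
  refine tendsto_atTop.2 fun C => ?_
  have hev := (hlim.eventually (lt_mem_nhds (a := ENNReal.ofReal (2 * C + 1))
    ENNReal.ofReal_lt_top)).exists
  obtain ⟨n, hn⟩ := hev
  filter_upwards [eventually_ge_atTop (n : ℝ)] with x hx
  refine le_trans ?_ (integral_mul_Hf_mono μ (Nat.cast_nonneg n) hx)
  have isq : Integrable (fun y : ℝ => (min |y| (n:ℝ)) ^ 2) μ :=
    Integrable.of_bound (C := (n:ℝ) ^ 2) (by fun_prop) (ae_of_all _ fun y => by
      rw [Real.norm_of_nonneg (sq_nonneg _)]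
      exact pow_le_pow_left₀ (le_min (abs_nonneg _) (Nat.cast_nonneg n)) (min_le_right _ _) 2)
  have hle : ∫⁻ y, ENNReal.ofReal (min |y| (n:ℝ)) ∂μ
      ≤ ENNReal.ofReal (∫ y, ((min |y| (n:ℝ)) ^ 2 + 1) ∂μ) := by
    have iadd : Integrable (fun y : ℝ => (min |y| (n:ℝ)) ^ 2 + 1) μ :=
      isq.add (integrable_const 1)
    rw [ofReal_integral_eq_lintegral_ofReal iadd
      (ae_of_all _ fun y => add_nonneg (sq_nonneg _) zero_le_one)]
    refine lintegral_mono fun y => ENNReal.ofReal_le_ofReal ?_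
    nlinarith [sq_nonneg (min |y| (n:ℝ) - 1), sq_nonneg (min |y| (n:ℝ))]
  rw [integral_add isq (integrable_const _), integral_min_sq μ (Nat.cast_nonneg n)] at hle
  have h := hn.trans_le hle
  rw [ENNReal.ofReal_lt_ofReal_iff'] at h
  simp at h
  linarith [h.1]

/-! ### Consequences of relative stability -/

lemma eventually_mul_Hf_le (μ : Measure ℝ) (hHa : HaCond μ) {ε : ℝ} (hε : 0 < ε) :
    ∀ᶠ x in atTop, x * Hf μ x ≤ ε * Af μ x := by
  filter_upwards [hHa.eventually_ge_atTop ε⁻¹, eventually_gt_atTop 0] with x hx hx0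
  have h0 : 0 ≤ x * Hf μ x := mul_nonneg hx0.le (Hf_nonneg μ x)
  rcases h0.eq_or_lt with h | h
  · rw [← h, div_zero] at hx
    exact absurd hx (not_le.2 (inv_pos.2 hε))
  · rw [le_div_iff₀ h] at hx
    calc x * Hf μ x = ε * (ε⁻¹ * (x * Hf μ x)) := by field_simp
      _ ≤ _ := mul_le_mul_of_nonneg_left hx hε.le

lemma eventually_Af_pos (μ : Measure ℝ) (hHa : HaCond μ) : ∀ᶠ x in atTop, 0 < Af μ x := by
  filter_upwards [hHa.eventually_gt_atTop 0, eventually_gt_atTop 0] with x hx hx0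
  have h0 : 0 ≤ x * Hf μ x := mul_nonneg hx0.le (Hf_nonneg μ x)
  rcases h0.eq_or_lt with h | h
  · rw [← h, div_zero] at hx
    exact absurd hx (lt_irrefl _)
  · exact (div_pos_iff_of_pos_right h).1 hx

/-- `∫₀ˣ t H(t) dt = o(x A(x))`. Integrating `t H(t) ≤ ε A(t)` and then integrating by parts bounds
`I(x) = ∫₀ˣ t H(t) dt` by `C + ε (x A(x) + I(x))`; the constant is absorbed because `I(x) → ∞`. -/
lemma eventually_integral_mul_Hf_le (μ : Measure ℝ) [IsProbabilityMeasure μ]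
    (hmean : ∫⁻ x, ENNReal.ofReal |x| ∂μ = ⊤) (hHa : HaCond μ) {ε : ℝ} (hε : 0 < ε) :
    ∀ᶠ x in atTop, ∫ t in (0:ℝ)..x, t * Hf μ t ≤ ε * (x * Af μ x) := by
  obtain ⟨δ, hδ, hδ4, hδε⟩ : ∃ δ : ℝ, 0 < δ ∧ δ ≤ 1 / 4 ∧ 2 * δ ≤ ε :=
    ⟨min (1 / 4) (ε / 2), by positivity, min_le_left _ _, by
      linarith [min_le_right (1 / 4 : ℝ) (ε / 2)]⟩
  obtain ⟨T, hT⟩ := eventually_atTop.1 (eventually_mul_Hf_le μ hHa hδ)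
  obtain ⟨S, hS0, hST⟩ : ∃ S : ℝ, 0 ≤ S ∧ T ≤ S := ⟨max 0 T, le_max_left _ _, le_max_right _ _⟩
  set C : ℝ := (∫ t in (0:ℝ)..S, t * Hf μ t) - δ * ∫ t in (0:ℝ)..S, Af μ t with hC
  filter_upwards [(tendsto_integral_mul_Hf μ hmean).eventually_ge_atTop (4 * C),
    eventually_ge_atTop S, eventually_Af_pos μ hHa] with x hI hx hA
  have hx0 := hS0.trans hx
  have iA : ∀ a b, IntervalIntegrable (Af μ) volume a b := fun a b =>
    (continuous_Af μ).intervalIntegrable a b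
  have h1 : ∫ t in S..x, t * Hf μ t ≤ ∫ t in S..x, δ * Af μ t :=
    intervalIntegral.integral_mono_on hx (intervalIntegrable_mul_Hf μ S x)
      ((iA S x).const_mul δ) fun t ht => hT t (hST.trans ht.1)
  rw [intervalIntegral.integral_const_mul] at h1
  have h2 := intervalIntegral.integral_add_adjacent_intervals
    (intervalIntegrable_mul_Hf μ 0 S) (intervalIntegrable_mul_Hf μ S x)
  have h3 := intervalIntegral.integral_add_adjacent_intervals (iA 0 S) (iA S x)
  have h4 := integral_Af_le μ hx0
  have hI0 : 0 ≤ ∫ t in (0:ℝ)..x, t * Hf μ t :=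
    intervalIntegral.integral_nonneg hx0 fun t ht => mul_nonneg ht.1 (Hf_nonneg μ t)
  set I := ∫ t in (0:ℝ)..x, t * Hf μ t
  have h5 : I ≤ C + δ * (x * Af μ x + I) := by
    have := mul_le_mul_of_nonneg_left h4 hδ.le
    rw [← h3] at this
    linarith
  have h6 : δ * I ≤ 1 / 4 * I := mul_le_mul_of_nonneg_right hδ4 hI0
  have h7 : 2 * δ * (x * Af μ x) ≤ ε * (x * Af μ x) :=
    mul_le_mul_of_nonneg_right hδε (mul_nonneg hx0 hA.le)
  linarith

/-! ### Comparison of the characteristic function with `A` -/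

/-- Pointwise comparison: on `|y| ≤ 1/|θ|` the first-order Taylor remainder of the exponential is at
most quadratic, and elsewhere every term is bounded. -/
lemma norm_one_sub_exp_add_le {θ : ℝ} (hθ : θ ≠ 0) (y : ℝ) :
    ‖1 - Complex.exp (Complex.I * θ * y)
        + Complex.I * θ * ((max (min y (1 / |θ|)) (-(1 / |θ|)) : ℝ) : ℂ)‖
      ≤ θ ^ 2 * (min |y| (1 / |θ|)) ^ 2 + 3 * {z : ℝ | 1 / |θ| < |z|}.indicator 1 y := by
  have hp : 0 < |θ| := abs_pos.2 hθ
  by_cases h : |y| ≤ 1 / |θ|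
  · have hy := abs_le.1 h
    rw [min_eq_left hy.2, max_eq_left hy.1, min_eq_left h,
      indicator_of_notMem (s := {z : ℝ | 1 / |θ| < |z|}) (fun hm => not_lt.2 h hm)]
    have hn : ‖Complex.I * θ * y‖ = |θ| * |y| := by simp
    have h1 : ‖Complex.I * θ * y‖ ≤ 1 := by
      rw [hn]
      calc |θ| * |y| ≤ |θ| * (1 / |θ|) := by gcongr
        _ = 1 := by field_simp
    have := Complex.norm_exp_sub_one_sub_id_le h1
    rw [← norm_neg, hn, mul_pow, sq_abs] at this
    calc _ = ‖-(Complex.exp (Complex.I * θ * y) - 1 - Complex.I * θ * y)‖ := by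
          congr 1; ring
      _ ≤ θ ^ 2 * |y| ^ 2 := this
      _ = _ := by ring
  · push Not at h
    rw [indicator_of_mem (show y ∈ {z : ℝ | 1 / |θ| < |z|} from h)]
    have hx : 0 < 1 / |θ| := by positivity
    have hc : |max (min y (1 / |θ|)) (-(1 / |θ|))| ≤ 1 / |θ| :=
      abs_le.2 ⟨le_max_right _ _, max_le (min_le_right _ _) (by linarith)⟩
    have he : ‖Complex.exp (Complex.I * θ * y)‖ = 1 := by
      rw [show Complex.I * θ * y = ((θ * y : ℝ) : ℂ) * Complex.I by push_cast; ring,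
        Complex.norm_exp_ofReal_mul_I]
    have hm : ‖Complex.I * θ * ((max (min y (1 / |θ|)) (-(1 / |θ|)) : ℝ) : ℂ)‖ ≤ 1 := by
      rw [norm_mul, norm_mul, Complex.norm_I, Complex.norm_real, Complex.norm_real, one_mul,
        Real.norm_eq_abs, Real.norm_eq_abs]
      calc |θ| * _ ≤ |θ| * (1 / |θ|) := by gcongr
        _ = 1 := by field_simp
    have h1 := norm_add_le (1 - Complex.exp (Complex.I * θ * y))
      (Complex.I * θ * ((max (min y (1 / |θ|)) (-(1 / |θ|)) : ℝ) : ℂ))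
    have h2 := norm_sub_le 1 (Complex.exp (Complex.I * θ * y))
    rw [norm_one, he] at h2
    have h3 : 0 ≤ θ ^ 2 * (min |y| (1 / |θ|)) ^ 2 := by positivity
    simp only [Pi.one_apply]
    linarith

lemma norm_one_sub_charF_add_le (μ : Measure ℝ) [IsProbabilityMeasure μ] {θ : ℝ} (hθ : θ ≠ 0) :
    ‖1 - charF μ θ + Complex.I * θ * (Af μ (1 / |θ|) : ℝ)‖
      ≤ θ ^ 2 * (2 * ∫ t in (0:ℝ)..(1 / |θ|), t * Hf μ t) + 3 * Hf μ (1 / |θ|) := by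
  have hx : 0 ≤ 1 / |θ| := by positivity
  have iexp : Integrable (fun y : ℝ => Complex.exp (Complex.I * θ * y)) μ :=
    Integrable.of_bound (C := 1) (by fun_prop) (ae_of_all _ fun y => by
      rw [show Complex.I * θ * y = ((θ * y : ℝ) : ℂ) * Complex.I by push_cast; ring,
        Complex.norm_exp_ofReal_mul_I])
  have iclamp : Integrable (fun y : ℝ => max (min y (1 / |θ|)) (-(1 / |θ|))) μ :=
    Integrable.of_bound (C := 1 / |θ|) (by fun_prop) (ae_of_all _ fun y =>
      abs_le.2 ⟨le_max_right _ _, max_le (min_le_right _ _) (by linarith)⟩)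
  have isq : Integrable (fun y : ℝ => (min |y| (1 / |θ|)) ^ 2) μ :=
    Integrable.of_bound (C := (1 / |θ|) ^ 2) (by fun_prop) (ae_of_all _ fun y => by
      rw [Real.norm_of_nonneg (sq_nonneg _)]
      exact pow_le_pow_left₀ (le_min (abs_nonneg _) hx) (min_le_right _ _) 2)
  have hms : MeasurableSet {z : ℝ | 1 / |θ| < |z|} := 
    measurableSet_lt measurable_const measurable_norm
  have iind : Integrable ({z : ℝ | 1 / |θ| < |z|}.indicator (1 : ℝ → ℝ)) μ :=
    (integrable_const (1 : ℝ)).indicator hms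
  have e1 : 1 - charF μ θ + Complex.I * θ * (Af μ (1 / |θ|) : ℝ)
      = ∫ y : ℝ, (1 - Complex.exp (Complex.I * θ * y)
        + Complex.I * θ * ((max (min y (1 / |θ|)) (-(1 / |θ|)) : ℝ) : ℂ)) ∂μ := by
    have isub : Integrable (fun y : ℝ => 1 - Complex.exp (Complex.I * θ * y)) μ :=
      (integrable_const 1).sub iexp
    have imul : Integrable (fun y : ℝ => Complex.I * θ *
        ((max (min y (1 / |θ|)) (-(1 / |θ|)) : ℝ) : ℂ)) μ := iclamp.ofReal.const_mul _
    rw [integral_add isub imul, integral_sub (integrable_const _) iexp, integral_const_mul, integral_complex_ofReal,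
      ← Af_eq μ hx]
    simp [charF]
  have e2 : ∫ y, {z : ℝ | 1 / |θ| < |z|}.indicator (1 : ℝ → ℝ) y ∂μ = Hf μ (1 / |θ|) := by
    rw [integral_indicator_one hms]; rfl
  rw [e1, ← integral_min_sq μ hx, ← e2, ← integral_const_mul, ← integral_const_mul,
    ← integral_add (isq.const_mul _) (iind.const_mul _)]
  exact norm_integral_le_of_norm_le ((isq.const_mul _).add (iind.const_mul _))
    (ae_of_all _ fun y => norm_one_sub_exp_add_le hθ y)

/-- Under (Ha), `1 - φ(θ) = -iθ A(1/|θ|)(1 + o(1))` as `θ → 0`. -/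
theorem stmt14 (μ : Measure ℝ) [IsProbabilityMeasure μ]
    (hmean : ∫⁻ x, ENNReal.ofReal |x| ∂μ = ⊤)
    (hHa : HaCond μ) :
    Tendsto (fun θ : ℝ =>
        (1 - charF μ θ) / (-Complex.I * θ * (Af μ (1 / |θ|) : ℝ)))
      (𝓝[≠] 0) (𝓝 1) := by
  have hlim : Tendsto (fun θ : ℝ => 1 / |θ|) (𝓝[≠] 0) atTop := by
    simp only [one_div]
    exact tendsto_inv_nhdsGT_zero.comp tendsto_abs_nhdsNE_zero
  rw [Metric.tendsto_nhds]
  intro ε hε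
  have hδ : 0 < ε / 6 := by positivity
  filter_upwards [hlim.eventually (eventually_Af_pos μ hHa),
    hlim.eventually (eventually_mul_Hf_le μ hHa hδ),
    hlim.eventually (eventually_integral_mul_Hf_le μ hmean hHa hδ),
    self_mem_nhdsWithin] with θ hA hH hI hθ
  have hθ' : θ ≠ 0 := hθ
  have hp : 0 < |θ| := abs_pos.2 hθ'
  set a := Af μ (1 / |θ|) with ha
  have hne : -Complex.I * θ * (a : ℂ) ≠ 0 := by
    simp [hθ', hA.ne']
  have hmain := norm_one_sub_charF_add_le μ hθ'
  rw [← ha] at hmain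
  have e : (1 - charF μ θ) / (-Complex.I * θ * (a : ℂ)) - 1
      = (1 - charF μ θ + Complex.I * θ * (a : ℂ)) / (-Complex.I * θ * (a : ℂ)) := by
    rw [div_sub_one hne]; ring
  have hn : ‖-Complex.I * θ * (a : ℂ)‖ = |θ| * a := by
    simp [abs_of_pos hA]
  rw [dist_eq_norm, e, norm_div, hn, div_lt_iff₀ (by positivity)]
  refine hmain.trans_lt ?_
  have h1 : θ ^ 2 * (2 * ∫ t in (0:ℝ)..(1 / |θ|), t * Hf μ t) ≤ ε / 3 * (|θ| * a) := by
    calc _ ≤ θ ^ 2 * (2 * (ε / 6 * (1 / |θ| * a))) := by gcongr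
      _ = |θ| ^ 2 * (2 * (ε / 6 * (1 / |θ| * a))) := by rw [sq_abs]
      _ = ε / 3 * (|θ| * a) := by field_simp; norm_num
  have h2 : 3 * Hf μ (1 / |θ|) ≤ ε / 2 * (|θ| * a) := by
    calc 3 * Hf μ (1 / |θ|) = 3 * |θ| * (1 / |θ| * Hf μ (1 / |θ|)) := by field_simp
      _ ≤ 3 * |θ| * (ε / 6 * a) := by gcongr
      _ = ε / 2 * (|θ| * a) := by ring
  have h3 : 0 < ε * (|θ| * a) := by positivity
  linarith
end
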